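/- For every ε > 0, the Lebesgue measure of the set {x ∈ (0,1) : |S_n(x)/(n (log n)^2) − 1/(2 log 2)| ≥ ε} tends to 0 as n → ∞. (Weak law of large numbers for sums of products of consecutive partial quotients.) -/

import Mathlib

/-!
The proof is a truncation argument. It is run under the Gauss measure `gm`, with density
`1 / ((1 + x) log 2)` on `(0, 1)`, which is invariant under the Gauss map `T` and comparable to
Lebesgue measure (`volume_le_gm`). Write `a₁, a₂` for the first two digits.

*Mixing.* The transfer operator `P f y = ∑ₐ w_a(y) f (1 / (a + 1 + y))` is dual to composition
with `T` (`integral_transfer`) and multiplies Lipschitz constants on `[0, 1]` by at most `11/12`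
(`LipUnit.transfer`). Hence the correlations of a Lipschitz function with a bounded function of
`T^k x` decay exponentially (`decay`). The truncated product `phi N = a₁ a₂ 1{a₁ a₂ ≤ N}` is not
Lipschitz, but `P² (phi N)` is, with constant `O(log² N)` (`truncT_lip`), because `P²` of the
indicator of the cylinder with digits `A, B` is Lipschitz with constant `O(1 / (AB)²)`. So the
covariances of `phi N` at lag `k + 2` are `O((11/12)^k log⁴ N)` (`cov_phi`).

*Moments.* The cylinder with digits `A, B` has measure `(1 + O(1/A + 1/B)) / (log 2 · A² B²)`
(`integral_wt2`), and `∑_{AB ≤ N} 1 / (AB) = (log N)² / 2 + O(log N)` (`hypSum_bounds`). Hence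
`phi N` has mean `(log N)² / (2 log 2) + O(log N)` (`mean_phi`) and second moment `O(N log N)`
(`mean_phi_sq`), while the event `a₁ a₂ > N` has measure `O(log N / N)` (`tail_bound`).

*Conclusion.* Take `N = ⌊n (log n)²⌋`. Some term among the first `n` is truncated with probability
`O(1 / log n)`. Otherwise `S n` is the sum of the `phi N ∘ T^i`, whose mean is asymptotic to
`n (log n)² / (2 log 2)` and whose variance is `O(n (N log N + log⁴ N))` (`variance_bound`), so
Chebyshev's inequality bounds the remaining probability by `O(1 / log n + 1 / n)`
(`deviation_bound`).
-/

open MeasureTheory Filter Real Set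

/-- The Gauss map `T(x) = 1/x - ⌊1/x⌋`, with `T(0) = 0`. -/
noncomputable def gaussMap (x : ℝ) : ℝ := if x = 0 then 0 else 1 / x - ⌊1 / x⌋

/-- The `n`-th partial quotient `a_n(x) = ⌊1 / T^{n-1}(x)⌋` (for `n ≥ 1`). -/
noncomputable def pq (n : ℕ) (x : ℝ) : ℕ := ⌊1 / (gaussMap^[n - 1] x)⌋₊

/-- `S_n(x) = ∑_{i=1}^n a_i(x) a_{i+1}(x)`. -/
noncomputable def S (n : ℕ) (x : ℝ) : ℕ := ∑ i ∈ Finset.Icc 1 n, pq i x * pq (i + 1) x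

/-! ### The Gauss transfer operator contracts Lipschitz constants -/

/-- The weight that the Gauss transfer operator gives to the inverse branch of digit `a + 1`. -/
noncomputable def wt (a : ℕ) (y : ℝ) : ℝ := (1 + y) / ((a + 1 + y) * (a + 2 + y))

lemma wt_nonneg (a : ℕ) {y : ℝ} (hy : 0 ≤ y) : 0 ≤ wt a y := by
  unfold wt; positivity

lemma wt_le (a : ℕ) {y : ℝ} (hy : 0 ≤ y) (hy1 : y ≤ 1) : wt a y ≤ 2 * wt a 0 := by
  unfold wt
  rw [mul_div_assoc']
  gcongr
  linarith

/-- The weights form a probability vector: the series telescopes. -/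
lemma hasSum_wt {y : ℝ} (hy : 0 ≤ y) : HasSum (fun a => wt a y) 1 := by
  rw [hasSum_iff_tendsto_nat_of_nonneg (fun a => wt_nonneg a hy)]
  have h : ∀ n : ℕ, ∑ i ∈ Finset.range n, wt i y = 1 - (1 + y) / (n + 1 + y) := by
    intro n
    induction n with
    | zero =>
      have : 1 + y ≠ 0 := by positivity
      simp [this]
    | succ k ih =>
      rw [Finset.sum_range_succ, ih, wt]
      have h1 : (k : ℝ) + 1 + y ≠ 0 := by positivity
      have h2 : (k : ℝ) + 2 + y ≠ 0 := by positivity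
      have h3 : (k : ℝ) + 1 + 1 + y ≠ 0 := by positivity
      push_cast
      field_simp
      ring
  simp_rw [h]
  have : Tendsto (fun n : ℕ => (1 + y) / ((n : ℝ) + 1 + y)) atTop (nhds 0) := by
    apply Tendsto.div_atTop tendsto_const_nhds
    exact tendsto_atTop_add_const_right _ _
      (tendsto_atTop_add_const_right _ _ tendsto_natCast_atTop_atTop)
  simpa using this.const_sub 1

/-- `f` is `L`-Lipschitz on `[0, 1]`. -/
def LipUnit (L : ℝ) (f : ℝ → ℝ) : Prop :=
  ∀ x ∈ Icc (0 : ℝ) 1, ∀ y ∈ Icc (0 : ℝ) 1, |f x - f y| ≤ L * |x - y|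

/-- The transfer operator of the Gauss map with respect to the Gauss measure. -/
noncomputable def transfer (f : ℝ → ℝ) (y : ℝ) : ℝ := ∑' a : ℕ, wt a y * f (1 / (a + 1 + y))

lemma branch_mem (a : ℕ) {y : ℝ} (hy : y ∈ Icc (0 : ℝ) 1) :
    1 / ((a : ℝ) + 1 + y) ∈ Icc (0 : ℝ) 1 := by
  obtain ⟨h0, h1⟩ := hy
  constructor
  · positivity
  · rw [div_le_one (by positivity)]
    have : (0 : ℝ) ≤ a := by positivity
    linarith

lemma LipUnit.bounded {L : ℝ} {f : ℝ → ℝ} (hL : 0 ≤ L) (hf : LipUnit L f) {x : ℝ}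
    (hx : x ∈ Icc (0 : ℝ) 1) : |f x| ≤ |f 0| + L := by
  have h := hf x hx 0 (by simp)
  have h2 : |x - 0| ≤ 1 := by rw [sub_zero, abs_of_nonneg hx.1]; exact hx.2
  have h3 : |f x| ≤ |f 0| + |f x - f 0| := by
    have := abs_add_le (f 0) (f x - f 0)
    simpa using this
  nlinarith

lemma summable_transfer {M : ℝ} {f : ℝ → ℝ} (hf : ∀ x ∈ Icc (0 : ℝ) 1, |f x| ≤ M) {y : ℝ}
    (hy : y ∈ Icc (0 : ℝ) 1) : Summable (fun a : ℕ => wt a y * f (1 / (a + 1 + y))) := by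
  refine Summable.of_norm_bounded ((hasSum_wt hy.1).summable.mul_right M) fun a => ?_
  rw [norm_mul, Real.norm_eq_abs, Real.norm_eq_abs, abs_of_nonneg (wt_nonneg a hy.1)]
  exact mul_le_mul_of_nonneg_left (hf _ (branch_mem a hy)) (wt_nonneg a hy.1)

/-- Lipschitz estimate for the weights of the digits at least `3`. The two remaining weights are
handled separately in `LipUnit.transfer`. -/
lemma wt_diff (a : ℕ) (ha : 2 ≤ a) {x y : ℝ} (hx : x ∈ Icc (0 : ℝ) 1) (hy : y ∈ Icc (0 : ℝ) 1) :
    |wt a x - wt a y| ≤ wt a 0 * |x - y| := by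
  obtain ⟨hx0, hx1⟩ := hx
  obtain ⟨hy0, hy1⟩ := hy
  have ha' : (2 : ℝ) ≤ a := by exact_mod_cast ha
  set r : ℝ := (a : ℝ) with hr
  have key : wt a x - wt a y = (x - y) *
      ((r * (r + 1 + x + (r + 1 + y) + 1) - (r + 1 + x) * (r + 1 + y)) /
        ((r + 1 + x) * (r + 2 + x) * ((r + 1 + y) * (r + 2 + y)))) := by
    unfold wt
    rw [← hr]
    field_simp
    ring
  rw [key, abs_mul, mul_comm]
  refine mul_le_mul_of_nonneg_right ?_ (abs_nonneg _)
  rw [abs_div, abs_of_pos (a := (r + 1 + x) * (r + 2 + x) * ((r + 1 + y) * (r + 2 + y)))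
    (by positivity)]
  have hnum : |r * (r + 1 + x + (r + 1 + y) + 1) - (r + 1 + x) * (r + 1 + y)| ≤
      (r + 1) * (r + 2) := by
    rw [abs_le]
    constructor <;> nlinarith [mul_nonneg hx0 hy0, mul_nonneg (sub_nonneg.2 hx1) (sub_nonneg.2 hy1)]
  have hden : ((r + 1) * (r + 2)) * ((r + 1) * (r + 2)) ≤
      (r + 1 + x) * (r + 2 + x) * ((r + 1 + y) * (r + 2 + y)) := by
    have e : ∀ z : ℝ, 0 ≤ z → (r + 1) * (r + 2) ≤ (r + 1 + z) * (r + 2 + z) := fun z hz =>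
      mul_le_mul (by linarith) (by linarith) (by positivity) (by positivity)
    exact mul_le_mul (e x hx0) (e y hy0) (by positivity) (by positivity)
  have : wt a 0 = (r + 1) * (r + 2) / (((r + 1) * (r + 2)) * ((r + 1) * (r + 2))) := by
    unfold wt
    rw [← hr]
    field_simp
    ring
  rw [this]
  gcongr

lemma branch_diff (a : ℕ) {x y : ℝ} (hx : x ∈ Icc (0 : ℝ) 1) (hy : y ∈ Icc (0 : ℝ) 1) :
    |1 / ((a : ℝ) + 1 + x) - 1 / (a + 1 + y)| ≤ |x - y| / (a + 1) ^ 2 := by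
  have hx0 := hx.1
  have hy0 := hy.1
  have h : 1 / ((a : ℝ) + 1 + x) - 1 / (a + 1 + y) = (y - x) / ((a + 1 + x) * (a + 1 + y)) := by
    field_simp
    ring
  rw [h, abs_div, abs_of_pos (a := ((a : ℝ) + 1 + x) * (a + 1 + y)) (by positivity), abs_sub_comm]
  gcongr
  nlinarith [mul_nonneg hx0 hy0, (Nat.cast_nonneg a : (0:ℝ) ≤ a),
    mul_nonneg hx0 (Nat.cast_nonneg a : (0:ℝ) ≤ a), mul_nonneg hy0 (Nat.cast_nonneg a : (0:ℝ) ≤ a)]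

/-- The transfer operator contracts Lipschitz constants. The constant is obtained by comparing
each branch with the branch of digit `2`. Since the weights sum to `1`, subtracting the constant
value `c` of `f` on that branch changes nothing, and the variation of the weight of digit `2` then
no longer contributes. -/
lemma LipUnit.transfer {L : ℝ} {f : ℝ → ℝ} (hL : 0 ≤ L) (hf : LipUnit L f) :
    LipUnit (11 / 12 * L) (transfer f) := by
  intro x hx y hy
  have hb : ∀ x ∈ Icc (0 : ℝ) 1, |f x| ≤ |f 0| + L := fun x hx => hf.bounded hL hx
  set c := f (1 / ((1 : ℕ) + 1 + y)) with hc
  have hs : HasSum (fun a : ℕ => wt a x * f (1 / (a + 1 + x)) - wt a y * f (1 / (a + 1 + y))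
      - (wt a x * c - wt a y * c)) (_root_.transfer f x - _root_.transfer f y - (1 * c - 1 * c)) :=
    ((summable_transfer hb hx).hasSum.sub (summable_transfer hb hy).hasSum).sub
      (((hasSum_wt hx.1).mul_right c).sub ((hasSum_wt hy.1).mul_right c))
  -- A termwise majorant whose sum is `1/4 + 1/2 + 1/4 - 1/12 = 11/12`; the last two terms
  -- account for the digits `1` and `2`.
  have hB : HasSum (fun a : ℕ => (wt a x * (1 / 4) + wt a 0 * (1 / 2) +
      ((if a = 0 then 1 / 4 else 0) + (if a = 1 then - (1 / 12) else 0))) * (L * |x - y|))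
      ((1 * (1 / 4) + 1 * (1 / 2) + (1 / 4 + - (1 / 12))) * (L * |x - y|)) := by
    refine ((((hasSum_wt hx.1).mul_right _).add ((hasSum_wt le_rfl).mul_right _)).add
      (HasSum.add ?_ ?_)).mul_right _
    · exact hasSum_ite_eq 0 _
    · exact hasSum_ite_eq 1 _
  have hle : ∀ a : ℕ, ‖wt a x * f (1 / (a + 1 + x)) - wt a y * f (1 / (a + 1 + y))
      - (wt a x * c - wt a y * c)‖ ≤ (wt a x * (1 / 4) + wt a 0 * (1 / 2) +
      ((if a = 0 then 1 / 4 else 0) + (if a = 1 then - (1 / 12) else 0))) * (L * |x - y|) := by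
    intro a
    have hwx := wt_nonneg a hx.1
    have e : wt a x * f (1 / (a + 1 + x)) - wt a y * f (1 / (a + 1 + y))
      - (wt a x * c - wt a y * c) = wt a x * (f (1 / (a + 1 + x)) - f (1 / (a + 1 + y))) +
        (wt a x - wt a y) * (f (1 / (a + 1 + y)) - c) := by ring
    have hLd : 0 ≤ L * |x - y| := mul_nonneg hL (abs_nonneg _)
    have h1 : |f (1 / (a + 1 + x)) - f (1 / (a + 1 + y))| ≤ L * |x - y| * (1 / (a + 1) ^ 2) := by
      refine (hf _ (branch_mem a hx) _ (branch_mem a hy)).trans ?_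
      refine (mul_le_mul_of_nonneg_left (branch_diff a hx hy) hL).trans (le_of_eq ?_)
      ring
    have h2 : |f (1 / (a + 1 + y)) - c| ≤ L * |1 / ((a : ℝ) + 1 + y) - 1 / ((1 : ℕ) + 1 + y)| :=
      hf _ (branch_mem a hy) _ (branch_mem 1 hy)
    rw [e, Real.norm_eq_abs]
    refine (abs_add_le _ _).trans ?_
    rw [abs_mul, abs_mul, abs_of_nonneg hwx]
    have h1' := mul_le_mul_of_nonneg_left h1 hwx
    obtain ⟨hx0, hx1⟩ := hx
    obtain ⟨hy0, hy1⟩ := hy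
    rcases Nat.lt_or_ge a 2 with ha | ha
    · interval_cases a
      · have hw : wt 0 x ≤ 1 / 2 := by
          unfold wt
          rw [div_le_div_iff₀ (by positivity) (by positivity)]
          push_cast
          nlinarith
        have hw0 : wt 0 0 = 1 / 2 := by simp [wt]
        have hd : |wt 0 x - wt 0 y| ≤ 1 / 4 * |x - y| := by
          have : wt 0 x - wt 0 y = (y - x) / ((2 + x) * (2 + y)) := by
            unfold wt
            push_cast
            have : 1 + x ≠ 0 := by positivity
            have : 1 + y ≠ 0 := by positivity
            field_simp
            ring
          rw [this, abs_div, abs_of_pos (a := (2 + x) * (2 + y)) (by positivity), abs_sub_comm,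
            div_eq_mul_one_div, mul_comm]
          gcongr
          nlinarith
        have hd2 : |1 / (((0 : ℕ) : ℝ) + 1 + y) - 1 / ((1 : ℕ) + 1 + y)| ≤ 1 / 2 := by
          have : 1 / (((0 : ℕ) : ℝ) + 1 + y) - 1 / ((1 : ℕ) + 1 + y) = 1 / ((1 + y) * (2 + y)) := by
            push_cast
            field_simp
            ring
          rw [this, abs_of_pos (by positivity)]
          gcongr
          nlinarith
        have h2' := h2.trans (mul_le_mul_of_nonneg_left hd2 hL)
        have := mul_le_mul hd h2' (abs_nonneg _) (by positivity)
        rw [hw0]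
        norm_num at h1' this ⊢
        nlinarith
      · have : c - c = 0 := sub_self c
        simp only [hc] at this ⊢
        rw [this]
        have hw0 : wt 1 0 = 1 / 6 := by norm_num [wt]
        rw [hw0]
        norm_num at h1' ⊢
        linarith
    · have hd := wt_diff a ha ⟨hx0, hx1⟩ ⟨hy0, hy1⟩
      have ha' : (2 : ℝ) ≤ a := by exact_mod_cast ha
      have hd2 : |1 / ((a : ℝ) + 1 + y) - 1 / ((1 : ℕ) + 1 + y)| ≤ 1 / 2 := by
        have p1 : 0 < 1 / ((a : ℝ) + 1 + y) := by positivity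
        have p2 : 0 < 1 / (((1 : ℕ) : ℝ) + 1 + y) := by positivity
        have p3 : 1 / ((a : ℝ) + 1 + y) ≤ 1 / 2 := by gcongr; linarith
        have p4 : 1 / (((1 : ℕ) : ℝ) + 1 + y) ≤ 1 / 2 := by
          gcongr; push_cast; linarith
        rw [abs_le]; constructor <;> linarith
      have h2' := h2.trans (mul_le_mul_of_nonneg_left hd2 hL)
      have h3 := mul_le_mul hd h2' (abs_nonneg _)
        (mul_nonneg (wt_nonneg a le_rfl) (abs_nonneg _))
      have h4 : 1 / ((a : ℝ) + 1) ^ 2 ≤ 1 / 4 := by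
        gcongr; nlinarith
      have h5 : wt a x * (L * |x - y| * (1 / ((a : ℝ) + 1) ^ 2)) ≤
          wt a x * (L * |x - y| * (1 / 4)) := by gcongr
      rw [if_neg (by omega), if_neg (by omega)]
      linarith
  have := hs.norm_le_of_bounded hB hle
  rw [Real.norm_eq_abs] at this
  calc _ = |_root_.transfer f x - _root_.transfer f y - (1 * c - 1 * c)| := by ring_nf
    _ ≤ _ := this
    _ = _ := by ring

/-! ### The Gauss measure and duality with the transfer operator -/

/-- The density of the Gauss measure. -/
noncomputable def gdens (x : ℝ) : ℝ := 1 / ((1 + x) * Real.log 2)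

/-- The Gauss measure on `(0, 1)`, as a measure on `ℝ`. -/
noncomputable def gm : Measure ℝ :=
  (volume.restrict (Ioo (0 : ℝ) 1)).withDensity (fun x => ENNReal.ofReal (gdens x))

lemma log_two_pos : 0 < Real.log 2 := Real.log_pos (by norm_num)

lemma measurable_gdens : Measurable gdens := by
  unfold gdens; fun_prop

lemma gdens_nonneg {x : ℝ} (hx : 0 ≤ x) : 0 ≤ gdens x := by
  have := log_two_pos
  unfold gdens; positivity

lemma integral_gm (f : ℝ → ℝ) : ∫ x, f x ∂gm = ∫ x in Ioo (0 : ℝ) 1, gdens x * f x := by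
  unfold gm
  rw [integral_withDensity_eq_integral_toReal_smul measurable_gdens.ennreal_ofReal
    (Eventually.of_forall fun x => ENNReal.ofReal_lt_top)]
  refine setIntegral_congr_fun measurableSet_Ioo fun x hx => ?_
  simp only [smul_eq_mul]
  rw [ENNReal.toReal_ofReal (gdens_nonneg hx.1.le)]

lemma integral_gdens : ∫ x in Ioo (0 : ℝ) 1, gdens x = 1 := by
  rw [← integral_Ioc_eq_integral_Ioo, ← intervalIntegral.integral_of_le zero_le_one]
  have h : ∀ x : ℝ, gdens x = (Real.log 2)⁻¹ * (1 + x)⁻¹ := fun x => by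
    unfold gdens; rw [one_div, mul_inv, mul_comm]
  simp_rw [h]
  rw [intervalIntegral.integral_const_mul,
    intervalIntegral.integral_comp_add_left (fun x => x⁻¹), integral_inv]
  · norm_num
  · norm_num [uIcc_of_le]

instance : IsProbabilityMeasure gm := by
  constructor
  unfold gm
  rw [withDensity_apply _ MeasurableSet.univ, Measure.restrict_univ,
    ← ofReal_integral_eq_lintegral_ofReal, integral_gdens, ENNReal.ofReal_one]
  · by_contra h
    have := integral_undef h
    rw [integral_gdens] at this
    norm_num at this
  · exact (ae_restrict_mem measurableSet_Ioo).mono fun x hx => gdens_nonneg hx.1.le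

lemma ae_gm : ∀ᵐ x ∂gm, x ∈ Ioo (0 : ℝ) 1 :=
  (withDensity_absolutelyContinuous _ _).ae_le (ae_restrict_mem measurableSet_Ioo)

lemma gm_le (A : Set ℝ) : gm A ≤ ENNReal.ofReal (1 / Real.log 2) * volume A := by
  have hl := log_two_pos
  have h : gm ≤ ENNReal.ofReal (1 / Real.log 2) • (volume.restrict (Ioo (0 : ℝ) 1)) := by
    unfold gm
    rw [← withDensity_const]
    refine withDensity_mono ((ae_restrict_mem measurableSet_Ioo).mono fun x hx => ?_)
    refine ENNReal.ofReal_le_ofReal ?_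
    unfold gdens
    gcongr
    nlinarith [hx.1]
  refine (h A).trans ?_
  simp only [Measure.smul_apply, smul_eq_mul]
  gcongr
  exact Measure.restrict_le_self

lemma volume_le_gm (A : Set ℝ) :
    volume (A ∩ Ioo (0 : ℝ) 1) ≤ ENNReal.ofReal (2 * Real.log 2) * gm A := by
  have hl := log_two_pos
  have h : volume.restrict (Ioo (0 : ℝ) 1) ≤ ENNReal.ofReal (2 * Real.log 2) • gm := by
    unfold gm
    rw [← withDensity_smul _ measurable_gdens.ennreal_ofReal]
    conv_lhs => rw [← withDensity_one (μ := volume.restrict (Ioo (0 : ℝ) 1))]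
    refine withDensity_mono ((ae_restrict_mem measurableSet_Ioo).mono fun x hx => ?_)
    simp only [Pi.one_apply, Pi.smul_apply, smul_eq_mul]
    rw [← ENNReal.ofReal_mul (by positivity), ← ENNReal.ofReal_one]
    refine ENNReal.ofReal_le_ofReal ?_
    unfold gdens
    have h0 : 0 < 1 + x := by linarith [hx.1]
    rw [mul_one_div, le_div_iff₀ (by positivity)]
    nlinarith [hx.2]
  have := h A
  rwa [Measure.restrict_apply' measurableSet_Ioo] at this

/-- The first partial quotient. -/
noncomputable def dig (x : ℝ) : ℕ := ⌊1 / x⌋₊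

lemma measurable_dig : Measurable dig := by
  unfold dig
  exact Nat.measurable_floor.comp (by fun_prop)

lemma measurable_gaussMap : Measurable gaussMap := by
  unfold gaussMap
  refine Measurable.ite (measurableSet_singleton 0) measurable_const ?_
  have : Measurable fun x : ℝ => (1 / x : ℝ) := by fun_prop
  exact this.sub (measurable_from_top.comp (Int.measurable_floor.comp this))

lemma dig_eq_iff {x : ℝ} (hx : 0 < x) (a : ℕ) :
    dig x = a + 1 ↔ x ∈ Ioc (1 / ((a : ℝ) + 2)) (1 / (a + 1)) := by
  unfold dig
  rw [Nat.floor_eq_iff (by positivity), mem_Ioc, le_div_iff₀ hx, div_lt_iff₀ hx,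
    div_lt_iff₀ (by positivity), le_div_iff₀ (by positivity)]
  push_cast
  constructor <;> rintro ⟨h1, h2⟩ <;> constructor <;> linarith

lemma dig_branch (a : ℕ) {y : ℝ} (hy : y ∈ Ioo (0 : ℝ) 1) : dig (1 / (a + 1 + y)) = a + 1 := by
  have := hy.1
  unfold dig
  rw [one_div_one_div, Nat.floor_eq_iff (by positivity)]
  push_cast
  constructor <;> linarith [hy.1, hy.2]

lemma gaussMap_branch (a : ℕ) {y : ℝ} (hy : y ∈ Ioo (0 : ℝ) 1) :
    gaussMap (1 / (a + 1 + y)) = y := by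
  have := hy.1
  unfold gaussMap
  rw [if_neg (by positivity), one_div_one_div]
  have : ⌊(a : ℝ) + 1 + y⌋ = a + 1 := by
    rw [Int.floor_eq_iff]
    push_cast
    constructor <;> linarith [hy.1, hy.2]
  rw [this]
  push_cast
  ring

/-- Change of variables on the branch of digit `a + 1`. -/
lemma integral_branch (a : ℕ) (u k : ℝ → ℝ) :
    ∫ x in {x | dig x = a + 1}, u x * k (gaussMap x) ∂gm =
      ∫ y, wt a y * u (1 / (a + 1 + y)) * k y ∂gm := by
  have hl := log_two_pos
  have hm : MeasurableSet {x | dig x = a + 1} := measurable_dig (measurableSet_singleton _)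
  rw [← integral_indicator hm, integral_gm, integral_gm]
  have h1 : ∀ x, gdens x * indicator {x | dig x = a + 1} (fun x => u x * k (gaussMap x)) x =
      indicator {x | dig x = a + 1} (fun x => gdens x * (u x * k (gaussMap x))) x := by
    intro x; by_cases h : dig x = a + 1 <;> simp [indicator, h]
  simp_rw [h1]
  rw [setIntegral_indicator hm]
  have himg : (fun y : ℝ => 1 / ((a : ℝ) + 1 + y)) '' Ioo 0 1 =
      Ioo (1 / ((a : ℝ) + 2)) (1 / (a + 1)) := by
    ext x
    constructor
    · rintro ⟨y, ⟨h0, h1⟩, rfl⟩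
      constructor <;> apply one_div_lt_one_div_of_lt <;> first | positivity | linarith
    · rintro ⟨h0, h1⟩
      have hx : 0 < x := lt_trans (by positivity) h0
      refine ⟨1 / x - (a + 1), ⟨?_, ?_⟩, ?_⟩
      · rw [lt_div_iff₀ (by positivity)] at h1
        rw [sub_pos, lt_div_iff₀ hx]
        linarith
      · rw [div_lt_iff₀ (by positivity)] at h0
        rw [sub_lt_iff_lt_add, div_lt_iff₀ hx]
        linarith
      · simp
  have hset : (Ioo (0 : ℝ) 1 ∩ {x | dig x = a + 1} : Set ℝ) =ᵐ[volume]
      (fun y : ℝ => 1 / ((a : ℝ) + 1 + y)) '' Ioo 0 1 := by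
    rw [himg]
    have h2 : (Ioo (0 : ℝ) 1 ∩ {x | dig x = a + 1} : Set ℝ) =
        Ioo 0 1 ∩ Ioc (1 / ((a : ℝ) + 2)) (1 / (a + 1)) := by
      ext x
      exact and_congr_right fun hx => dig_eq_iff hx.1 a
    have h3 : Ioo (1 / ((a : ℝ) + 2)) (1 / (a + 1)) =
        Ioo (0 : ℝ) 1 ∩ Ioo (1 / ((a : ℝ) + 2)) (1 / (a + 1)) := by
      refine (inter_eq_right.2 (Ioo_subset_Ioo (by positivity) ?_)).symm
      rw [div_le_one (by positivity)]
      have : (0 : ℝ) ≤ a := by positivity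
      linarith
    rw [h2, h3]
    exact (ae_eq_refl _).inter Ioo_ae_eq_Ioc.symm
  rw [setIntegral_congr_set hset, integral_image_eq_integral_abs_deriv_smul measurableSet_Ioo
    (f' := fun y => -1 / ((a : ℝ) + 1 + y) ^ 2)]
  · refine setIntegral_congr_fun measurableSet_Ioo fun y hy => ?_
    have hy0 := hy.1
    simp only [smul_eq_mul]
    rw [gaussMap_branch a hy, abs_div, abs_neg, abs_one, abs_of_pos (by positivity)]
    unfold gdens wt
    have e1 : (a : ℝ) + 1 + y ≠ 0 := by positivity
    have e2 : (a : ℝ) + 2 + y ≠ 0 := by positivity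
    have e3 : 1 + y ≠ 0 := by positivity
    have e4 : 1 + 1 / ((a : ℝ) + 1 + y) = (a + 2 + y) / (a + 1 + y) := by
      field_simp; ring
    rw [e4]
    field_simp
  · intro y hy
    have hy0 := hy.1
    have : HasDerivAt (fun y : ℝ => (a : ℝ) + 1 + y) 1 y := by
      simpa using (hasDerivAt_id y).const_add ((a : ℝ) + 1)
    have h := this.inv (by positivity)
    simp only [one_div]
    exact h.hasDerivWithinAt
  · intro x hx y hy h
    simp only [one_div, inv_inj] at h
    linarith

/-- Duality between composition with the Gauss map and the transfer operator. -/
lemma integral_transfer {f g : ℝ → ℝ} {M M' : ℝ} (hfm : Measurable f) (hgm : Measurable g)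
    (hf : ∀ x ∈ Icc (0 : ℝ) 1, |f x| ≤ M) (hg : ∀ x, |g x| ≤ M') :
    ∫ x, f x * g (gaussMap x) ∂gm = ∫ y, transfer f y * g y ∂gm := by
  have hM : 0 ≤ M := (abs_nonneg _).trans (hf 0 (by simp))
  have hM' : 0 ≤ M' := (abs_nonneg _).trans (hg 0)
  have hint : Integrable (fun x => f x * g (gaussMap x)) gm := by
    refine Integrable.of_bound (hfm.mul (hgm.comp measurable_gaussMap)).aestronglyMeasurable
      (M * M') (ae_gm.mono fun x hx => ?_)
    rw [norm_mul]
    exact mul_le_mul (hf x ⟨hx.1.le, hx.2.le⟩) (hg _) (norm_nonneg _) hM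
  have hU : (⋃ a : ℕ, {x | dig x = a + 1} : Set ℝ) =ᵐ[gm] univ := by
    rw [eventuallyEq_univ]
    refine ae_gm.mono fun x hx => ?_
    have : 1 ≤ dig x := by
      unfold dig
      rw [Nat.one_le_floor_iff, le_div_iff₀ hx.1]
      linarith [hx.2]
    exact mem_iUnion.2 ⟨dig x - 1, by simp only [mem_ofPred_eq]; omega⟩
  have h1 := hasSum_integral_iUnion (μ := gm) (f := fun x => f x * g (gaussMap x))
    (s := fun a : ℕ => {x | dig x = a + 1})
    (fun a => measurable_dig (measurableSet_singleton _))
    (fun a b hab => Set.disjoint_left.2 fun x hx hy => hab (by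
      simp only [mem_ofPred_eq] at hx hy; omega)) hint.integrableOn
  rw [setIntegral_congr_set hU, setIntegral_univ] at h1
  simp_rw [integral_branch] at h1
  have hwm : ∀ a, Measurable fun y => wt a y * f (1 / (a + 1 + y)) * g y := by
    intro a
    refine (Measurable.mul ?_ (hfm.comp (by fun_prop))).mul hgm
    unfold wt
    fun_prop
  have hb : ∀ a : ℕ, ∀ᵐ y ∂gm, ‖wt a y * f (1 / (a + 1 + y)) * g y‖ ≤ 2 * wt a 0 * M * M' := by
    intro a
    refine ae_gm.mono fun y hy => ?_
    have hw := wt_le a hy.1.le hy.2.le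
    have hw0 := wt_nonneg a hy.1.le
    have hw1 := wt_nonneg a (le_refl 0)
    rw [norm_mul, norm_mul]
    refine mul_le_mul (mul_le_mul ?_ (hf _ (branch_mem a ⟨hy.1.le, hy.2.le⟩)) (norm_nonneg _)
      (by positivity)) (hg y) (norm_nonneg _) (by positivity)
    rwa [Real.norm_eq_abs, abs_of_nonneg hw0]
  have h2 := hasSum_integral_of_summable_integral_norm (μ := gm)
    (F := fun (a : ℕ) y => wt a y * f (1 / (a + 1 + y)) * g y)
    (fun a => Integrable.of_bound (hwm a).aestronglyMeasurable _ (hb a)) (by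
      refine Summable.of_nonneg_of_le (fun a => integral_nonneg fun y => norm_nonneg _)
        (fun a => ?_) ((((hasSum_wt (le_refl 0)).summable.mul_left 2).mul_right M).mul_right M')
      have := norm_integral_le_of_norm_le_const (μ := gm)
        (f := fun y => ‖wt a y * f (1 / (a + 1 + y)) * g y‖)
        ((hb a).mono fun y hy => by rwa [norm_norm])
      simpa using (le_abs_self _).trans this)
  rw [h1.unique h2]
  refine integral_congr_ae (ae_gm.mono fun y hy => ?_)
  simp only [transfer]
  rw [tsum_mul_right]

/-! ### Decay of correlations and two-digit cylinders -/

lemma integrable_gm {f : ℝ → ℝ} {M : ℝ} (hf : Measurable f) (hb : ∀ x, |f x| ≤ M) :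
    Integrable f gm :=
  Integrable.of_bound hf.aestronglyMeasurable M (Eventually.of_forall hb)

lemma measurable_wt (a : ℕ) : Measurable (wt a) := by
  unfold wt; fun_prop

lemma Measurable.gauss_transfer {f : ℝ → ℝ} (hf : Measurable f) : Measurable (transfer f) := by
  unfold transfer
  refine Measurable.tsum fun a => (measurable_wt a).mul (hf.comp (by fun_prop))

lemma transfer_one {y : ℝ} (hy : 0 ≤ y) : transfer (fun _ => 1) y = 1 := by
  simpa [transfer] using (hasSum_wt hy).tsum_eq

lemma integral_comp_gaussMap {g : ℝ → ℝ} {M : ℝ} (hgm : Measurable g) (hg : ∀ x, |g x| ≤ M) :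
    ∫ x, g (gaussMap x) ∂gm = ∫ x, g x ∂gm := by
  have h := integral_transfer (f := fun _ => 1) (M := 1) measurable_const hgm (by simp) hg
  simp only [one_mul] at h
  rw [h]
  refine integral_congr_ae (ae_gm.mono fun y hy => ?_)
  simp only
  rw [transfer_one hy.1.le, one_mul]

lemma measurePreserving_gaussMap : MeasurePreserving gaussMap gm gm := by
  refine ⟨measurable_gaussMap, ?_⟩
  ext A hA
  rw [Measure.map_apply measurable_gaussMap hA]
  have h := integral_comp_gaussMap (g := indicator A 1) (M := 1) (measurable_one.indicator hA)
    (fun x => by by_cases hx : x ∈ A <;> simp [indicator, hx])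
  have e : (fun x => indicator A (1 : ℝ → ℝ) (gaussMap x)) = indicator (gaussMap ⁻¹' A) 1 := rfl
  rw [e, integral_indicator_one (measurable_gaussMap hA), integral_indicator_one hA] at h
  exact (measureReal_eq_measureReal_iff).1 h

lemma integral_comp_iterate {g : ℝ → ℝ} (hgm : Measurable g) (k : ℕ) :
    ∫ x, g (gaussMap^[k] x) ∂gm = ∫ x, g x ∂gm := by
  have h := measurePreserving_gaussMap.iterate k
  conv_rhs => rw [← h.map_eq]
  rw [integral_map h.measurable.aemeasurable hgm.aestronglyMeasurable]

/-- Exponential decay of correlations of a Lipschitz function against a bounded one. -/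
lemma decay (k : ℕ) : ∀ {f g : ℝ → ℝ} {L M : ℝ}, 0 ≤ L → LipUnit L f → Measurable f →
    Measurable g → (∀ x, 0 ≤ g x) → (∀ x, g x ≤ M) →
    |∫ x, f x * g (gaussMap^[k] x) ∂gm - (∫ x, f x ∂gm) * ∫ x, g x ∂gm| ≤
      (11 / 12) ^ k * L * ∫ x, g x ∂gm := by
  induction k with
  | zero =>
    intro f g L M hL hf hfm hgm hg0 hgM
    have hM : 0 ≤ M := (hg0 0).trans (hgM 0)
    have hgi : Integrable g gm :=
      integrable_gm hgm (M := M) (fun x => by rw [abs_of_nonneg (hg0 x)]; exact hgM x)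
    have hfb : ∀ᵐ x ∂gm, ‖f x‖ ≤ |f 0| + L :=
      ae_gm.mono fun x hx => hf.bounded hL ⟨hx.1.le, hx.2.le⟩
    have hfi : Integrable f gm := Integrable.of_bound hfm.aestronglyMeasurable _ hfb
    have hfgi : Integrable (fun x => f x * g x) gm := hgi.bdd_mul hfm.aestronglyMeasurable hfb
    have hdev : ∀ x ∈ Ioo (0 : ℝ) 1, |f x - ∫ z, f z ∂gm| ≤ L := by
      intro x hx
      have h1 : f x - ∫ z, f z ∂gm = ∫ z, (f x - f z) ∂gm := by
        rw [integral_sub (integrable_const _) hfi]; simp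
      rw [h1]
      have := norm_integral_le_of_norm_le_const (μ := gm) (f := fun z => f x - f z) (C := L)
        (ae_gm.mono fun z hz => by
          refine (hf x ⟨hx.1.le, hx.2.le⟩ z ⟨hz.1.le, hz.2.le⟩).trans ?_
          have : |x - z| ≤ 1 := by
            rw [abs_le]; constructor <;> linarith [hx.1, hx.2, hz.1, hz.2]
          nlinarith)
      simpa using this
    simp only [Function.iterate_zero, id, pow_zero, one_mul]
    rw [← integral_const_mul, ← integral_sub hfgi (hgi.const_mul _), ← integral_const_mul]
    refine (abs_integral_le_integral_abs).trans (integral_mono_ae ?_ (hgi.const_mul _) ?_)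
    · exact (hfgi.sub (hgi.const_mul _)).abs
    · refine ae_gm.mono fun x hx => ?_
      simp only
      rw [← sub_mul, abs_mul, abs_of_nonneg (hg0 x)]
      exact mul_le_mul_of_nonneg_right (hdev x hx) (hg0 x)
  | succ k ih =>
    intro f g L M hL hf hfm hgm hg0 hgM
    have hb : ∀ x ∈ Icc (0 : ℝ) 1, |f x| ≤ |f 0| + L := fun x hx => hf.bounded hL hx
    have h := ih (by positivity) (hf.transfer hL) hfm.gauss_transfer hgm hg0 hgM
    have e1 := integral_transfer (g := fun x => g (gaussMap^[k] x)) (M' := M) hfm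
      (hgm.comp (measurable_gaussMap.iterate k)) hb
      (fun x => by rw [abs_of_nonneg (hg0 _)]; exact hgM _)
    have e2 := integral_transfer (g := fun _ => 1) (M' := 1) hfm measurable_const hb (by simp)
    simp only [mul_one] at e2
    simp only [Function.iterate_succ, Function.comp]
    rw [e1, e2]
    refine h.trans (le_of_eq ?_)
    ring

/-- The set where the first two partial quotients are `a + 1` and `b + 1`. -/
def cyl (a b : ℕ) : Set ℝ := {x | dig x = a + 1 ∧ dig (gaussMap x) = b + 1}

/-- The image under the squared transfer operator of the indicator of `cyl a b`. -/
noncomputable def wt2 (a b : ℕ) (y : ℝ) : ℝ := wt b y * wt a (1 / (b + 1 + y))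

lemma measurable_wt2 (a b : ℕ) : Measurable (wt2 a b) := by
  unfold wt2
  exact (measurable_wt b).mul ((measurable_wt a).comp (by fun_prop))

lemma measurableSet_cyl (a b : ℕ) : MeasurableSet (cyl a b) :=
  (measurable_dig (measurableSet_singleton _)).inter
    ((measurable_dig.comp measurable_gaussMap) (measurableSet_singleton _))

lemma integral_cyl (a b : ℕ) (k : ℝ → ℝ) :
    ∫ x, indicator (cyl a b) 1 x * k (gaussMap (gaussMap x)) ∂gm = ∫ y, wt2 a b y * k y ∂gm := by
  have hm : ∀ c : ℕ, MeasurableSet {x | dig x = c + 1} :=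
    fun c => measurable_dig (measurableSet_singleton _)
  have h1 : ∀ x, indicator (cyl a b) 1 x * k (gaussMap (gaussMap x)) =
      indicator {x | dig x = a + 1} (fun x => 1 *
        indicator {z | dig z = b + 1} (fun z => k (gaussMap z)) (gaussMap x)) x := by
    intro x
    by_cases ha : dig x = a + 1 <;> by_cases hb : dig (gaussMap x) = b + 1 <;>
      simp [indicator, cyl, ha, hb]
  simp_rw [h1]
  rw [integral_indicator (hm a), integral_branch a (fun _ => 1)]
  have h2 : ∀ y, wt a y * 1 * indicator {z | dig z = b + 1} (fun z => k (gaussMap z)) y =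
      indicator {z | dig z = b + 1} (fun z => wt a z * k (gaussMap z)) y := by
    intro y
    by_cases hb : dig y = b + 1 <;> simp [indicator, hb]
  simp_rw [h2]
  rw [integral_indicator (hm b), integral_branch b (wt a)]
  rfl

lemma wt2_eq (a b : ℕ) {y : ℝ} (hy : 0 ≤ y) : wt2 a b y = (1 + y) *
    ((1 / ((a + 1) * (b + 1 + y) + 1)) * (1 / ((a + 2) * (b + 1 + y) + 1))) := by
  unfold wt2 wt
  have e1 : (b : ℝ) + 1 + y ≠ 0 := by positivity
  have e2 : (b : ℝ) + 2 + y ≠ 0 := by positivity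
  have e3 : 1 + 1 / ((b : ℝ) + 1 + y) = (b + 2 + y) / (b + 1 + y) := by field_simp; ring
  have e4 : (a : ℝ) + 1 + 1 / (b + 1 + y) = ((a + 1) * (b + 1 + y) + 1) / (b + 1 + y) := by
    field_simp
  have e5 : (a : ℝ) + 2 + 1 / (b + 1 + y) = ((a + 2) * (b + 1 + y) + 1) / (b + 1 + y) := by
    field_simp
  have e6 : ((a : ℝ) + 1) * (b + 1 + y) + 1 ≠ 0 := by positivity
  have e7 : ((a : ℝ) + 2) * (b + 1 + y) + 1 ≠ 0 := by positivity
  rw [e3, e4, e5]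
  field_simp

lemma wt2_nonneg (a b : ℕ) {y : ℝ} (hy : 0 ≤ y) : 0 ≤ wt2 a b y := by
  rw [wt2_eq a b hy]; positivity

/-- The quadratic decay in each digit is what keeps the Lipschitz constant of `truncT` (where the
term of `cyl a b` carries the factor `(a + 1) * (b + 1)`) of size `O(log² N)`. -/
lemma wt2_lip (a b : ℕ) : LipUnit (5 / ((a + 1) * (b + 1)) ^ 2) (wt2 a b) := by
  intro x hx y hy
  obtain ⟨hx0, hx1⟩ := hx
  obtain ⟨hy0, hy1⟩ := hy
  rw [wt2_eq a b hx0, wt2_eq a b hy0]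
  set p : ℝ := 1 / ((a + 1) * (b + 1)) with hp
  have hp0 : 0 ≤ p := by positivity
  have hu : ∀ c z : ℝ, (a : ℝ) + 1 ≤ c → 0 ≤ z →
      0 ≤ 1 / (c * (b + 1 + z) + 1) ∧ 1 / (c * (b + 1 + z) + 1) ≤ p := by
    intro c z hc hz
    have : 0 < c := lt_of_lt_of_le (by positivity) hc
    refine ⟨by positivity, ?_⟩
    apply one_div_le_one_div_of_le (by positivity)
    have : ((a : ℝ) + 1) * (b + 1) ≤ c * (b + 1 + z) :=
      mul_le_mul hc (by linarith) (by positivity) (by positivity)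
    linarith
  have hul : ∀ c : ℝ, (a : ℝ) + 1 ≤ c →
      |1 / (c * (b + 1 + x) + 1) - 1 / (c * (b + 1 + y) + 1)| ≤ p * |x - y| := by
    intro c hc
    have hc0 : 0 < c := lt_of_lt_of_le (by positivity) hc
    have e : 1 / (c * (b + 1 + x) + 1) - 1 / (c * (b + 1 + y) + 1) =
        c * (y - x) * ((1 / (c * (b + 1 + x) + 1)) * (1 / (c * (b + 1 + y) + 1))) := by
      have e6 : c * (b + 1 + x) + 1 ≠ 0 := by positivity
      have e7 : c * (b + 1 + y) + 1 ≠ 0 := by positivity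
      field_simp
      ring
    have h1 : c * (1 / (c * (b + 1 + x) + 1)) ≤ 1 := by
      rw [mul_one_div, div_le_one (by positivity)]
      nlinarith [(by positivity : (0 : ℝ) ≤ c * (b + x))]
    have h2 := hu c y hc hy0
    have h3 := hu c x hc hx0
    rw [e, abs_mul, abs_mul, abs_of_pos hc0, abs_of_nonneg (mul_nonneg h3.1 h2.1), abs_sub_comm]
    calc c * |x - y| * (1 / (c * (b + 1 + x) + 1) * (1 / (c * (b + 1 + y) + 1)))
        = (c * (1 / (c * (b + 1 + x) + 1))) * (1 / (c * (b + 1 + y) + 1)) * |x - y| := by ring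
      _ ≤ 1 * p * |x - y| := by
          refine mul_le_mul_of_nonneg_right ?_ (abs_nonneg _)
          exact mul_le_mul h1 h2.2 h2.1 zero_le_one
      _ = _ := by ring
  have hc2 : (a : ℝ) + 1 ≤ a + 2 := by linarith
  have ux := hu _ x le_rfl hx0
  have uy := hu _ y le_rfl hy0
  have vx := hu _ x hc2 hx0
  have vy := hu _ y hc2 hy0
  have ul := hul _ le_rfl
  have vl := hul _ hc2
  have hP : 5 / (((a : ℝ) + 1) * (b + 1)) ^ 2 = 5 * p ^ 2 := by
    rw [hp, one_div, inv_pow]; rfl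
  rw [hP]
  generalize 1 / (((a : ℝ) + 1) * (b + 1 + x) + 1) = u1 at *
  generalize 1 / (((a : ℝ) + 1) * (b + 1 + y) + 1) = u2 at *
  generalize 1 / (((a : ℝ) + 2) * (b + 1 + x) + 1) = v1 at *
  generalize 1 / (((a : ℝ) + 2) * (b + 1 + y) + 1) = v2 at *
  have e : (1 + x) * (u1 * v1) - (1 + y) * (u2 * v2) =
      (x - y) * (u1 * v1) + (1 + y) * ((u1 - u2) * v1) + (1 + y) * (u2 * (v1 - v2)) := by ring
  rw [e]
  refine (abs_add_three _ _ _).trans ?_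
  simp only [abs_mul]
  rw [abs_of_nonneg ux.1, abs_of_nonneg vx.1, abs_of_nonneg uy.1,
    abs_of_nonneg (by linarith : 0 ≤ 1 + y)]
  have t1 : |x - y| * (u1 * v1) ≤ |x - y| * (p * p) :=
    mul_le_mul_of_nonneg_left (mul_le_mul ux.2 vx.2 vx.1 hp0) (abs_nonneg _)
  have t2 : (1 + y) * (|u1 - u2| * v1) ≤ 2 * (p * |x - y| * p) :=
    mul_le_mul (by linarith) (mul_le_mul ul vx.2 vx.1 (by positivity))
      (mul_nonneg (abs_nonneg _) vx.1) (by norm_num)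
  have t3 : (1 + y) * (u2 * |v1 - v2|) ≤ 2 * (p * (p * |x - y|)) :=
    mul_le_mul (by linarith) (mul_le_mul uy.2 vl (abs_nonneg _) hp0)
      (mul_nonneg uy.1 (abs_nonneg _)) (by norm_num)
  nlinarith

/-- Bounds on the Gauss integral from pointwise bounds against Lebesgue measure. -/
lemma integral_gm_bounds {f : ℝ → ℝ} {l u : ℝ} (hf : Measurable f)
    (h : ∀ y ∈ Ioo (0 : ℝ) 1, l ≤ gdens y * f y ∧ gdens y * f y ≤ u) :
    l ≤ ∫ y, f y ∂gm ∧ ∫ y, f y ∂gm ≤ u := by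
  rw [integral_gm]
  have hi : IntegrableOn (fun y => gdens y * f y) (Ioo (0 : ℝ) 1) := by
    refine Measure.integrableOn_of_bounded (M := max |l| |u|) (by simp)
      (measurable_gdens.mul hf).aestronglyMeasurable
      ((ae_restrict_mem measurableSet_Ioo).mono fun y hy => ?_)
    rw [Real.norm_eq_abs]
    exact abs_le_max_abs_abs (h y hy).1 (h y hy).2
  have hc : ∀ c : ℝ, IntegrableOn (fun _ => c) (Ioo (0 : ℝ) 1) := fun c => by simp
  have hcv : ∀ c : ℝ, ∫ _ in Ioo (0 : ℝ) 1, c = c := fun c => by simp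
  constructor
  · rw [← hcv l]
    exact setIntegral_mono_on (hc l) hi measurableSet_Ioo fun y hy => (h y hy).1
  · rw [← hcv u]
    exact setIntegral_mono_on hi (hc u) measurableSet_Ioo fun y hy => (h y hy).2

/-- The measure of `cyl a b` is `1 / (log 2 * A² * B²)` up to a relative error `O(1/A + 1/B)`,
where `A = a + 1` and `B = b + 1`. -/
lemma integral_wt2 (a b : ℕ) :
    1 / Real.log 2 * ((1 - 4 / (a + 1) - 4 / (b + 1)) / ((a + 1) * (b + 1)) ^ 2) ≤
      ∫ y, wt2 a b y ∂gm ∧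
    ∫ y, wt2 a b y ∂gm ≤ 1 / Real.log 2 * (1 / ((a + 1) * (b + 1)) ^ 2) := by
  have hl := log_two_pos
  refine integral_gm_bounds (measurable_wt2 a b) fun y hy => ?_
  have hy0 := hy.1
  have hy1 := hy.2
  have e : gdens y * wt2 a b y = 1 / Real.log 2 *
      (1 / (((a + 1) * (b + 1 + y) + 1) * ((a + 2) * (b + 1 + y) + 1))) := by
    rw [wt2_eq a b hy0.le]
    unfold gdens
    field_simp
  rw [e]
  have ha0 : (0 : ℝ) ≤ a := Nat.cast_nonneg a
  have hb0 : (0 : ℝ) ≤ b := Nat.cast_nonneg b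
  constructor
  · refine mul_le_mul_of_nonneg_left ?_ (by positivity)
    set A : ℝ := a + 1 with hA
    set B : ℝ := b + 1 with hB
    have hA1 : 1 ≤ A := by linarith
    have hB1 : 1 ≤ B := by linarith
    have h2 : (a : ℝ) + 2 = A + 1 := by rw [hA]; ring
    rw [h2]
    have hden : (A * (B + y) + 1) * ((A + 1) * (B + y) + 1) ≤
        (A * B + (A + B) + 1) * (A * B + (A + B) + 2) := by
      refine mul_le_mul ?_ ?_ (by positivity) (by positivity) <;> nlinarith
    refine le_trans ?_ (one_div_le_one_div_of_le (by positivity) hden)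
    have e2 : (1 - 4 / A - 4 / B) / (A * B) ^ 2 = (A * B - 4 * (A + B)) / (A * B) ^ 3 := by
      field_simp
      ring
    rw [e2, div_le_div_iff₀ (by positivity) (by positivity)]
    have hs : 2 ≤ A + B := by linarith
    have hp : 0 < A * B := by positivity
    generalize A * B = p at *
    generalize A + B = s at *
    have q1 : 0 ≤ p ^ 2 * (2 * s - 3) := mul_nonneg (by positivity) (by linarith)
    have q2 : 0 ≤ p * (7 * s ^ 2 + 9 * s - 2) := mul_nonneg hp.le (by nlinarith)
    have q3 : 0 ≤ 4 * s * ((s + 1) * (s + 2)) := by positivity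
    nlinarith
  · refine mul_le_mul_of_nonneg_left ?_ (by positivity)
    apply one_div_le_one_div_of_le (by positivity)
    rw [pow_two]
    refine mul_le_mul ?_ ?_ (by positivity) (by positivity) <;>
      nlinarith [mul_nonneg ha0 hb0, mul_nonneg ha0 hy0.le]

/-- The function `c (a₁ a₂)` truncated to `a₁ a₂ ≤ N`. -/
noncomputable def trunc (c : ℕ → ℝ) (N : ℕ) (x : ℝ) : ℝ :=
  if dig x * dig (gaussMap x) ≤ N then c (dig x * dig (gaussMap x)) else 0

lemma measurable_trunc (c : ℕ → ℝ) (N : ℕ) : Measurable (trunc c N) := by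
  have h : Measurable fun x => dig x * dig (gaussMap x) :=
    measurable_dig.mul (measurable_dig.comp measurable_gaussMap)
  exact (measurable_from_top (f := fun m : ℕ => if m ≤ N then c m else 0)).comp h

/-- The condition `c 0 = 0` discards the junk points where a digit vanishes (for instance `x ≤ 0`). -/
lemma trunc_eq {c : ℕ → ℝ} (hc : c 0 = 0) (N : ℕ) (x : ℝ) :
    trunc c N x = ∑ a ∈ Finset.range N, ∑ b ∈ Finset.range (N / (a + 1)),
      c ((a + 1) * (b + 1)) * indicator (cyl a b) 1 x := by
  unfold trunc cyl
  rcases Nat.eq_zero_or_pos (dig x) with h1 | h1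
  · simp [h1, hc, indicator]
  rcases Nat.eq_zero_or_pos (dig (gaussMap x)) with h2 | h2
  · simp [h2, hc, indicator]
  obtain ⟨a, ha⟩ : ∃ a, dig x = a + 1 := ⟨dig x - 1, by omega⟩
  obtain ⟨b, hb⟩ : ∃ b, dig (gaussMap x) = b + 1 := ⟨dig (gaussMap x) - 1, by omega⟩
  have e : ∀ a' b', c ((a' + 1) * (b' + 1)) *
      indicator {x | dig x = a' + 1 ∧ dig (gaussMap x) = b' + 1} (1 : ℝ → ℝ) x =
      if a = a' then (if b = b' then c ((a' + 1) * (b' + 1)) else 0) else 0 := by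
    intro a' b'
    by_cases h3 : a = a' <;> by_cases h4 : b = b' <;> simp [indicator, ha, hb, h3, h4]
  simp_rw [e]
  have e2 : ∀ a', (∑ b' ∈ Finset.range (N / (a' + 1)),
      if a = a' then (if b = b' then c ((a' + 1) * (b' + 1)) else 0) else 0) =
      if a = a' then (∑ b' ∈ Finset.range (N / (a' + 1)),
        if b = b' then c ((a' + 1) * (b' + 1)) else 0) else 0 := by
    intro a'; by_cases h3 : a = a' <;> simp [h3]
  simp_rw [e2]
  rw [Finset.sum_ite_eq, ha, hb]
  by_cases h : (a + 1) * (b + 1) ≤ N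
  · have h5 : a < N := by nlinarith
    have h6 : b < N / (a + 1) := by
      rw [Nat.lt_iff_add_one_le, Nat.le_div_iff_mul_le (by omega)]; nlinarith
    simp [h, h5, h6]
  · have h6 : ¬ b < N / (a + 1) := by
      rw [Nat.lt_iff_add_one_le, Nat.le_div_iff_mul_le (by omega)]; nlinarith
    simp [h, h6]

/-- The image of `trunc c N` under the squared transfer operator. -/
noncomputable def truncT (c : ℕ → ℝ) (N : ℕ) (y : ℝ) : ℝ :=
  ∑ a ∈ Finset.range N, ∑ b ∈ Finset.range (N / (a + 1)), c ((a + 1) * (b + 1)) * wt2 a b y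

lemma integrable_wt2 (a b : ℕ) : Integrable (wt2 a b) gm :=
  Integrable.of_bound (measurable_wt2 a b).aestronglyMeasurable _
    (ae_gm.mono fun _ hx => (wt2_lip a b).bounded (by positivity) ⟨hx.1.le, hx.2.le⟩)

/-- Two applications of the transfer operator, carried out on each two-digit cylinder. -/
lemma integral_trunc_mul {c : ℕ → ℝ} (hc : c 0 = 0) (N : ℕ) {k : ℝ → ℝ} {M : ℝ}
    (hk : Measurable k) (hkM : ∀ x, |k x| ≤ M) :
    ∫ x, trunc c N x * k (gaussMap (gaussMap x)) ∂gm = ∫ y, truncT c N y * k y ∂gm := by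
  have hki : Integrable (fun x => k (gaussMap (gaussMap x))) gm :=
    integrable_gm (hk.comp (measurable_gaussMap.comp measurable_gaussMap)) (fun x => hkM _)
  simp_rw [trunc_eq hc, truncT, Finset.sum_mul, mul_assoc]
  rw [integral_finsetSum, integral_finsetSum]
  · refine Finset.sum_congr rfl fun a _ => ?_
    rw [integral_finsetSum, integral_finsetSum]
    · refine Finset.sum_congr rfl fun b _ => ?_
      rw [integral_const_mul, integral_const_mul, integral_cyl]
    · exact fun b _ => ((integrable_wt2 a b).mul_bdd hk.aestronglyMeasurable
        (Eventually.of_forall hkM)).const_mul _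
    · refine fun b _ => (hki.bdd_mul (c := 1)
        (measurable_one.indicator (measurableSet_cyl a b)).aestronglyMeasurable
        (Eventually.of_forall fun x => ?_)).const_mul _
      by_cases hx : x ∈ cyl a b <;> simp [indicator, hx]
  · exact fun a _ => integrable_finsetSum _ fun b _ =>
      ((integrable_wt2 a b).mul_bdd hk.aestronglyMeasurable
        (Eventually.of_forall hkM)).const_mul _
  · refine fun a _ => integrable_finsetSum _ fun b _ => (hki.bdd_mul (c := 1)
        (measurable_one.indicator (measurableSet_cyl a b)).aestronglyMeasurable
        (Eventually.of_forall fun x => ?_)).const_mul _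
    by_cases hx : x ∈ cyl a b <;> simp [indicator, hx]

lemma integral_trunc {c : ℕ → ℝ} (hc : c 0 = 0) (N : ℕ) :
    ∫ x, trunc c N x ∂gm = ∑ a ∈ Finset.range N, ∑ b ∈ Finset.range (N / (a + 1)),
      c ((a + 1) * (b + 1)) * ∫ y, wt2 a b y ∂gm := by
  have h := integral_trunc_mul hc N (k := fun _ => 1) (M := 1) measurable_const (by simp)
  simp only [mul_one] at h
  rw [h]
  unfold truncT
  rw [integral_finsetSum _ fun a _ => integrable_finsetSum _ fun b _ =>
    (integrable_wt2 a b).const_mul _]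
  refine Finset.sum_congr rfl fun a _ => ?_
  rw [integral_finsetSum _ fun b _ => (integrable_wt2 a b).const_mul _]
  exact Finset.sum_congr rfl fun b _ => integral_const_mul _ _

/-! ### Hyperbola sums and moments of the truncated product -/

lemma harmonic_cast (n : ℕ) : (harmonic n : ℝ) = ∑ i ∈ Finset.range n, 1 / ((i : ℝ) + 1) := by
  unfold harmonic
  push_cast
  simp

lemma harmonic_bounds (N : ℕ) :
    Real.log N ≤ harmonic N ∧ (harmonic N : ℝ) ≤ 1 + Real.log N := by
  refine ⟨?_, harmonic_le_one_add_log N⟩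
  have := log_le_harmonic_floor N (Nat.cast_nonneg N)
  rwa [Nat.floor_natCast] at this

lemma sum_inv_sq_le (n : ℕ) : ∑ i ∈ Finset.range n, 1 / ((i : ℝ) + 1) ^ 2 ≤ 2 - 1 / (n : ℝ) := by
  induction n with
  | zero => simp
  | succ k ih =>
    rw [Finset.sum_range_succ]
    rcases Nat.eq_zero_or_pos k with rfl | hk
    · norm_num
    · have hk' : (0 : ℝ) < k := by exact_mod_cast hk
      have : 1 / ((k : ℝ) + 1) ^ 2 ≤ 1 / k - 1 / (k + 1) := by
        rw [div_sub_div _ _ (by positivity) (by positivity),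
          div_le_div_iff₀ (by positivity) (by positivity)]
        nlinarith
      push_cast
      linarith

lemma sum_inv_sq_le_two (n : ℕ) : ∑ i ∈ Finset.range n, 1 / ((i : ℝ) + 1) ^ 2 ≤ 2 := by
  have := sum_inv_sq_le n
  have h : (0 : ℝ) ≤ 1 / (n : ℝ) := by positivity
  linarith

/-- `2 ∑ H_A / A = H_N² + ∑ 1 / A²`. -/
lemma sum_harmonic_div (n : ℕ) : 2 * ∑ a ∈ Finset.range n, (harmonic (a + 1) : ℝ) / (a + 1) =
    (harmonic n : ℝ) ^ 2 + ∑ i ∈ Finset.range n, 1 / ((i : ℝ) + 1) ^ 2 := by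
  induction n with
  | zero => simp
  | succ k ih =>
    rw [Finset.sum_range_succ, Finset.sum_range_succ, mul_add, ih, harmonic_succ]
    push_cast
    field_simp
    ring

/-- `∑ log A / A` is half the squared harmonic number, up to `O(H_n)`. -/
lemma sum_log_div_bounds (n : ℕ) :
    (harmonic n : ℝ) ^ 2 / 2 - harmonic n ≤
      ∑ a ∈ Finset.range n, Real.log (a + 1) / ((a : ℝ) + 1) ∧
    ∑ a ∈ Finset.range n, Real.log (a + 1) / ((a : ℝ) + 1) ≤
      (harmonic n : ℝ) ^ 2 / 2 + harmonic n / 2 := by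
  have hW := sum_harmonic_div n
  have h0 : 0 ≤ ∑ i ∈ Finset.range n, 1 / ((i : ℝ) + 1) ^ 2 :=
    Finset.sum_nonneg fun i _ => by positivity
  have h1 : ∑ i ∈ Finset.range n, 1 / ((i : ℝ) + 1) ^ 2 ≤ (harmonic n : ℝ) := by
    rw [harmonic_cast]
    refine Finset.sum_le_sum fun i _ => ?_
    apply one_div_le_one_div_of_le (by positivity)
    nlinarith [(Nat.cast_nonneg i : (0 : ℝ) ≤ i)]
  have hb : ∀ a : ℕ, Real.log (a + 1) ≤ harmonic (a + 1) ∧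
      (harmonic (a + 1) : ℝ) ≤ 1 + Real.log (a + 1) := fun a => by
    have := harmonic_bounds (a + 1)
    push_cast at this
    exact this
  constructor
  · have : ∑ a ∈ Finset.range n, (harmonic (a + 1) : ℝ) / (a + 1) - harmonic n ≤
        ∑ a ∈ Finset.range n, Real.log (a + 1) / ((a : ℝ) + 1) := by
      rw [harmonic_cast, ← Finset.sum_sub_distrib]
      refine Finset.sum_le_sum fun a _ => ?_
      rw [← sub_div]
      gcongr
      linarith [(hb a).2]
    linarith
  · have : ∑ a ∈ Finset.range n, Real.log (a + 1) / ((a : ℝ) + 1) ≤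
        ∑ a ∈ Finset.range n, (harmonic (a + 1) : ℝ) / (a + 1) := by
      refine Finset.sum_le_sum fun a _ => ?_
      gcongr
      exact (hb a).1
    linarith

/-- The hyperbola sum `∑_{AB ≤ N} 1 / (AB)`. -/
noncomputable def hypSum (N : ℕ) : ℝ :=
  ∑ a ∈ Finset.range N, ∑ b ∈ Finset.range (N / (a + 1)), 1 / (((a : ℝ) + 1) * (b + 1))

/-- `∑_{AB ≤ N} 1 / (AB) = (log N)² / 2 + O(1 + log N)`: the inner sums are the harmonic numbers
`H_{⌊N/A⌋}`, which are `log N - log A + O(1)`. -/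
lemma hypSum_bounds {N : ℕ} (hN : 1 ≤ N) :
    Real.log N ^ 2 / 2 - (1 + Real.log N) ≤ hypSum N ∧
      hypSum N ≤ Real.log N ^ 2 / 2 + 2 * (1 + Real.log N) := by
  have hN0 : (0 : ℝ) < N := by exact_mod_cast hN
  have e : hypSum N = ∑ a ∈ Finset.range N, (harmonic (N / (a + 1)) : ℝ) / (a + 1) := by
    unfold hypSum
    refine Finset.sum_congr rfl fun a _ => ?_
    rw [harmonic_cast, Finset.sum_div]
    refine Finset.sum_congr rfl fun b _ => ?_
    rw [div_div, mul_comm]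
  have hb : ∀ a ∈ Finset.range N,
      Real.log N - Real.log (a + 1) ≤ harmonic (N / (a + 1)) ∧
      (harmonic (N / (a + 1)) : ℝ) ≤ 1 + (Real.log N - Real.log (a + 1)) := by
    intro a ha
    have ha' : (a : ℝ) + 1 ≤ N := by exact_mod_cast Finset.mem_range.1 ha
    have hf : ⌊(N : ℝ) / (a + 1)⌋₊ = N / (a + 1) := by
      have := Nat.floor_div_eq_div (K := ℝ) N (a + 1)
      push_cast at this
      exact this
    rw [← Real.log_div (by positivity) (by positivity), ← hf]
    exact ⟨log_le_harmonic_floor _ (by positivity),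
      harmonic_floor_le_one_add_log _ (by rwa [le_div_iff₀ (by positivity), one_mul])⟩
  have hs : ∑ a ∈ Finset.range N, (Real.log N - Real.log (a + 1)) / ((a : ℝ) + 1) =
      harmonic N * Real.log N - ∑ a ∈ Finset.range N, Real.log (a + 1) / ((a : ℝ) + 1) := by
    rw [harmonic_cast, Finset.sum_mul, ← Finset.sum_sub_distrib]
    refine Finset.sum_congr rfl fun a _ => ?_
    ring
  have hlo : harmonic N * Real.log N - ∑ a ∈ Finset.range N, Real.log (a + 1) / ((a : ℝ) + 1) ≤
      hypSum N := by
    rw [← hs, e]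
    refine Finset.sum_le_sum fun a ha => ?_
    gcongr
    exact (hb a ha).1
  have hhi : hypSum N ≤ harmonic N + (harmonic N * Real.log N -
      ∑ a ∈ Finset.range N, Real.log (a + 1) / ((a : ℝ) + 1)) := by
    rw [← hs, e]
    conv_rhs => rw [harmonic_cast, ← Finset.sum_add_distrib]
    refine Finset.sum_le_sum fun a ha => ?_
    rw [← add_div]
    gcongr
    exact (hb a ha).2
  obtain ⟨l1, l2⟩ := sum_log_div_bounds N
  obtain ⟨h1, h2⟩ := harmonic_bounds N
  have hl : 0 ≤ Real.log N := Real.log_natCast_nonneg N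
  constructor <;> nlinarith [sq_nonneg ((harmonic N : ℝ) - Real.log N)]

/-- Total contribution to the mean of `phi N` of the relative errors `4/A + 4/B` in the measures
of the cylinders. -/
lemma hyp_err (N : ℕ) :
    ∑ a ∈ Finset.range N, ∑ b ∈ Finset.range (N / (a + 1)),
      (4 / ((a : ℝ) + 1) + 4 / (b + 1)) / ((a + 1) * (b + 1)) ≤ 16 * (1 + Real.log N) := by
  have h1 : ∑ a ∈ Finset.range N, ∑ b ∈ Finset.range (N / (a + 1)),
      (4 / ((a : ℝ) + 1) + 4 / (b + 1)) / ((a + 1) * (b + 1)) ≤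
      ∑ a ∈ Finset.range N, ∑ b ∈ Finset.range N,
      (4 * ((1 / ((a : ℝ) + 1) ^ 2) * (1 / ((b : ℝ) + 1))) +
        4 * ((1 / ((a : ℝ) + 1)) * (1 / ((b : ℝ) + 1) ^ 2))) := by
    refine Finset.sum_le_sum fun a _ => ?_
    refine (Finset.sum_le_sum_of_subset_of_nonneg
      (Finset.range_mono (Nat.div_le_self N (a + 1))) fun b _ _ => by positivity).trans ?_
    refine Finset.sum_le_sum fun b _ => le_of_eq ?_
    field_simp
  refine h1.trans ?_
  have h2 := sum_inv_sq_le_two N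
  have h3 := (harmonic_bounds N).2
  have h4 : (0 : ℝ) ≤ harmonic N := by
    rw [harmonic_cast]; exact Finset.sum_nonneg fun i _ => by positivity
  simp only [Finset.sum_add_distrib, ← Finset.mul_sum, ← Finset.sum_mul, ← harmonic_cast]
  have hl : 0 ≤ Real.log N := Real.log_natCast_nonneg N
  nlinarith [mul_le_mul h2 h3 h4 (by norm_num)]

/-- The truncated product `a₁ a₂ 1{a₁ a₂ ≤ N}`. -/
noncomputable def phi (N : ℕ) : ℝ → ℝ := trunc (fun m => (m : ℝ)) N

lemma phi_nonneg (N : ℕ) (x : ℝ) : 0 ≤ phi N x := by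
  unfold phi trunc; split_ifs <;> positivity

lemma phi_le (N : ℕ) (x : ℝ) : phi N x ≤ N := by
  unfold phi trunc
  split_ifs with h
  · exact Nat.cast_le.2 h
  · positivity

lemma measurable_phi (N : ℕ) : Measurable (phi N) := measurable_trunc _ N

lemma mean_phi {N : ℕ} (hN : 1 ≤ N) :
    |∫ x, phi N x ∂gm - Real.log N ^ 2 / (2 * Real.log 2)| ≤
      17 / Real.log 2 * (1 + Real.log N) := by
  have hl2 := log_two_pos
  have hl : 0 ≤ Real.log N := Real.log_natCast_nonneg N
  have e := integral_trunc (c := fun m => (m : ℝ)) (by simp) N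
  obtain ⟨d1, d2⟩ := hypSum_bounds hN
  have hhi : ∫ x, phi N x ∂gm ≤ 1 / Real.log 2 * hypSum N := by
    unfold phi hypSum
    rw [e, Finset.mul_sum]
    refine Finset.sum_le_sum fun a _ => ?_
    rw [Finset.mul_sum]
    refine Finset.sum_le_sum fun b _ => ?_
    refine (mul_le_mul_of_nonneg_left (integral_wt2 a b).2 (by positivity)).trans (le_of_eq ?_)
    push_cast
    field_simp
  have hlo : 1 / Real.log 2 * (hypSum N - 16 * (1 + Real.log N)) ≤ ∫ x, phi N x ∂gm := by
    have h1 : hypSum N - 16 * (1 + Real.log N) ≤ hypSum N -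
      ∑ a ∈ Finset.range N, ∑ b ∈ Finset.range (N / (a + 1)),
      (4 / ((a : ℝ) + 1) + 4 / (b + 1)) / ((a + 1) * (b + 1)) := by
      linarith [hyp_err N]
    refine (mul_le_mul_of_nonneg_left h1 (by positivity)).trans ?_
    unfold phi hypSum
    rw [e, ← Finset.sum_sub_distrib, Finset.mul_sum]
    refine Finset.sum_le_sum fun a _ => ?_
    rw [← Finset.sum_sub_distrib, Finset.mul_sum]
    refine Finset.sum_le_sum fun b _ => ?_
    refine le_trans (le_of_eq ?_)
      (mul_le_mul_of_nonneg_left (integral_wt2 a b).1 (by positivity))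
    push_cast
    field_simp
    ring
  have i2 : 0 < 1 / Real.log 2 := by positivity
  have e3 : Real.log N ^ 2 / (2 * Real.log 2) = 1 / Real.log 2 * (Real.log N ^ 2 / 2) := by
    field_simp
  have e4 : 17 / Real.log 2 = 17 * (1 / Real.log 2) := by ring
  rw [e3, e4, abs_le]
  generalize 1 / Real.log 2 = i at *
  constructor <;> nlinarith

lemma mean_phi_sq {N : ℕ} (hN : 1 ≤ N) :
    ∫ x, phi N x ^ 2 ∂gm ≤ 1 / Real.log 2 * (N * (1 + Real.log N)) := by
  have hl2 := log_two_pos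
  have hsq : ∀ x, phi N x ^ 2 = trunc (fun m => (m : ℝ) ^ 2) N x := by
    intro x
    unfold phi trunc
    split_ifs <;> simp
  simp_rw [hsq]
  rw [integral_trunc (by simp)]
  have h1 : ∀ a ∈ Finset.range N, ∑ b ∈ Finset.range (N / (a + 1)),
      (((a + 1) * (b + 1) : ℕ) : ℝ) ^ 2 * ∫ y, wt2 a b y ∂gm ≤
      1 / Real.log 2 * (N * (1 / ((a : ℝ) + 1))) := by
    intro a _
    calc _ ≤ ∑ b ∈ Finset.range (N / (a + 1)), 1 / Real.log 2 := by
          refine Finset.sum_le_sum fun b _ => ?_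
          refine (mul_le_mul_of_nonneg_left (integral_wt2 a b).2 (by positivity)).trans
            (le_of_eq ?_)
          push_cast
          field_simp
      _ = 1 / Real.log 2 * ((N / (a + 1) : ℕ) : ℝ) := by
          rw [Finset.sum_const, Finset.card_range, nsmul_eq_mul, mul_comm]
      _ ≤ _ := by
          refine mul_le_mul_of_nonneg_left ?_ (by positivity)
          refine Nat.cast_div_le.trans (le_of_eq ?_)
          push_cast
          ring
  refine (Finset.sum_le_sum h1).trans ?_
  rw [← Finset.mul_sum, ← Finset.mul_sum, ← harmonic_cast]
  have := (harmonic_bounds N).2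
  gcongr

/-- Summing `wt2_lip` over the cylinders produces the hyperbola sum. -/
lemma truncT_lip {N : ℕ} (hN : 1 ≤ N) :
    LipUnit (10 * (1 + Real.log N) ^ 2) (truncT (fun m => (m : ℝ)) N) := by
  intro x hx y hy
  have hl : 0 ≤ Real.log N := Real.log_natCast_nonneg N
  have h1 : |truncT (fun m => (m : ℝ)) N x - truncT (fun m => (m : ℝ)) N y| ≤
      5 * hypSum N * |x - y| := by
    unfold truncT hypSum
    rw [← Finset.sum_sub_distrib, Finset.mul_sum, Finset.sum_mul]
    refine (Finset.abs_sum_le_sum_abs _ _).trans (Finset.sum_le_sum fun a _ => ?_)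
    rw [← Finset.sum_sub_distrib, Finset.mul_sum, Finset.sum_mul]
    refine (Finset.abs_sum_le_sum_abs _ _).trans (Finset.sum_le_sum fun b _ => ?_)
    rw [← mul_sub, abs_mul, abs_of_nonneg (by positivity)]
    refine (mul_le_mul_of_nonneg_left (wt2_lip a b x hx y hy) (by positivity)).trans
      (le_of_eq ?_)
    push_cast
    field_simp
  refine h1.trans (mul_le_mul_of_nonneg_right ?_ (abs_nonneg _))
  nlinarith [(hypSum_bounds hN).2]

lemma measurable_truncT (c : ℕ → ℝ) (N : ℕ) : Measurable (truncT c N) := by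
  unfold truncT
  exact Finset.measurable_fun_sum _ fun a _ => Finset.measurable_fun_sum _ fun b _ =>
    (measurable_wt2 a b).const_mul _

/-- Covariances of the truncated products at lag at least two. -/
lemma cov_phi {N : ℕ} (hN : 1 ≤ N) (k : ℕ) :
    |∫ x, phi N x * phi N (gaussMap^[k + 2] x) ∂gm - (∫ x, phi N x ∂gm) ^ 2| ≤
      (11 / 12) ^ k * (200 / Real.log 2 * (1 + Real.log N) ^ 4) := by
  have hl2 := log_two_pos
  have hl : 0 ≤ Real.log N := Real.log_natCast_nonneg N
  have hb : ∀ x, |phi N x| ≤ N := fun x => by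
    rw [abs_of_nonneg (phi_nonneg N x)]; exact phi_le N x
  have e1 : ∫ x, phi N x * phi N (gaussMap^[k + 2] x) ∂gm =
      ∫ y, truncT (fun m => (m : ℝ)) N y * phi N (gaussMap^[k] y) ∂gm :=
    integral_trunc_mul (by simp) N (k := fun y => phi N (gaussMap^[k] y)) (M := N)
      ((measurable_phi N).comp (measurable_gaussMap.iterate k)) (fun x => hb _)
  have e2 : ∫ x, phi N x ∂gm = ∫ y, truncT (fun m => (m : ℝ)) N y ∂gm := by
    have := integral_trunc_mul (c := fun m => (m : ℝ)) (by simp) N (k := fun _ => 1) (M := 1)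
      measurable_const (by simp)
    simpa [phi] using this
  have h := decay k (by positivity) (truncT_lip hN) (measurable_truncT _ N) (measurable_phi N)
    (phi_nonneg N) (phi_le N)
  rw [← e1, ← e2] at h
  rw [pow_two]
  refine h.trans ?_
  have hm : ∫ x, phi N x ∂gm ≤ 20 / Real.log 2 * (1 + Real.log N) ^ 2 := by
    have h1 := (abs_le.1 (mean_phi hN)).2
    have e3 : Real.log N ^ 2 / (2 * Real.log 2) = 1 / Real.log 2 * (Real.log N ^ 2 / 2) := by
      field_simp
    have e4 : 17 / Real.log 2 = 17 * (1 / Real.log 2) := by ring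
    have e5 : 20 / Real.log 2 = 20 * (1 / Real.log 2) := by ring
    have i2 : 0 < 1 / Real.log 2 := by positivity
    rw [e3, e4] at h1
    rw [e5]
    generalize 1 / Real.log 2 = i at *
    have : i * (Real.log N ^ 2 / 2 + 17 * (1 + Real.log N)) ≤ i * (20 * (1 + Real.log N) ^ 2) :=
      mul_le_mul_of_nonneg_left (by nlinarith) i2.le
    linarith
  calc (11 / 12) ^ k * (10 * (1 + Real.log N) ^ 2) * ∫ x, phi N x ∂gm
      ≤ (11 / 12) ^ k * (10 * (1 + Real.log N) ^ 2) *
        (20 / Real.log 2 * (1 + Real.log N) ^ 2) := by gcongr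
    _ = _ := by ring

/-- The tail of the law of `a₁ a₂`: for each first digit the condition confines `x` to a short
interval ending at `1 / a₁`. -/
lemma tail_bound {N : ℕ} (hN : 1 ≤ N) :
    gm {x | N < dig x * dig (gaussMap x)} ≤
      ENNReal.ofReal (2 / Real.log 2 * ((1 + Real.log N) / N)) := by
  have hl2 := log_two_pos
  have hl : 0 ≤ Real.log N := Real.log_natCast_nonneg N
  have hN0 : (0 : ℝ) < N := by exact_mod_cast hN
  set U : Set ℝ := Ioc 0 (1 / (N : ℝ)) ∪
    ⋃ a ∈ Finset.range N, Icc ((N : ℝ) / ((a + 1) * (N + 1))) (1 / (a + 1)) with hU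
  have hsub : ∀ᵐ x ∂gm, x ∈ {x | N < dig x * dig (gaussMap x)} → x ∈ U := by
    refine ae_gm.mono fun x hx h => ?_
    simp only [mem_ofPred_eq] at h
    have hx0 := hx.1
    have hd1 : 0 < dig x := Nat.pos_of_ne_zero fun h0 => by simp [h0] at h
    have hd2 : 0 < dig (gaussMap x) := Nat.pos_of_ne_zero fun h0 => by simp [h0] at h
    have hle : (dig x : ℝ) ≤ 1 / x := Nat.floor_le (by positivity)
    rw [le_div_iff₀ hx0] at hle
    rcases le_or_gt (dig x) N with hdN | hdN
    · right
      obtain ⟨a, ha⟩ : ∃ a, dig x = a + 1 := ⟨dig x - 1, by omega⟩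
      rw [mem_iUnion₂]
      refine ⟨a, Finset.mem_range.2 (by omega), ?_⟩
      rw [ha] at hle h
      push_cast at hle
      have hT : gaussMap x = 1 / x - (a + 1) := by
        unfold gaussMap
        rw [if_neg hx0.ne']
        have : ((⌊1 / x⌋ : ℤ) : ℝ) = (dig x : ℝ) := by
          unfold dig
          rw [natCast_floor_eq_intCast_floor (by positivity)]
        rw [this, ha]
        push_cast
        ring
      have hy0 : 0 ≤ gaussMap x := by
        rw [hT, sub_nonneg, le_div_iff₀ hx0]; exact hle
      have hy1 : 0 < gaussMap x := lt_of_le_of_ne hy0 fun h0 => by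
        simp [dig, ← h0] at hd2
      have hle2 : (dig (gaussMap x) : ℝ) ≤ 1 / gaussMap x := Nat.floor_le (by positivity)
      rw [le_div_iff₀ hy1] at hle2
      have h' : (N : ℝ) ≤ (a + 1) * dig (gaussMap x) := by exact_mod_cast h.le
      have h3 : (N : ℝ) * gaussMap x ≤ a + 1 := by
        calc (N : ℝ) * gaussMap x ≤ (a + 1) * dig (gaussMap x) * gaussMap x := by gcongr
          _ = (a + 1) * (dig (gaussMap x) * gaussMap x) := by ring
          _ ≤ (a + 1) * 1 := by gcongr
          _ = _ := by ring
      rw [hT, mul_sub, mul_one_div, sub_le_iff_le_add, div_le_iff₀ hx0] at h3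
      constructor
      · rw [div_le_iff₀ (by positivity)]
        linarith
      · rw [le_div_iff₀ (by positivity)]
        linarith
    · left
      refine ⟨hx0, ?_⟩
      rw [le_div_iff₀ hN0]
      have : (N : ℝ) ≤ dig x := by exact_mod_cast hdN.le
      nlinarith
  refine (measure_mono_ae hsub).trans ((gm_le U).trans ?_)
  have hvol : volume U ≤ ENNReal.ofReal (1 / N + ∑ a ∈ Finset.range N,
      (1 / ((a : ℝ) + 1)) * (1 / N)) := by
    rw [ENNReal.ofReal_add (by positivity) (Finset.sum_nonneg fun i _ => by positivity),
      ENNReal.ofReal_sum_of_nonneg fun i _ => by positivity]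
    refine (measure_union_le _ _).trans (add_le_add ?_ ?_)
    · rw [Real.volume_Ioc, sub_zero]
    · refine (measure_biUnion_finset_le _ _).trans (Finset.sum_le_sum fun a _ => ?_)
      rw [Real.volume_Icc]
      apply ENNReal.ofReal_le_ofReal
      have : 1 / ((a : ℝ) + 1) - N / ((a + 1) * (N + 1)) = 1 / (a + 1) * (1 / (N + 1)) := by
        field_simp
        ring
      rw [this]
      gcongr
      linarith
  refine (mul_le_mul_right hvol _).trans ?_
  rw [← ENNReal.ofReal_mul (by positivity)]
  apply ENNReal.ofReal_le_ofReal
  rw [← Finset.sum_mul, ← harmonic_cast]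
  have h3 := (harmonic_bounds N).2
  calc 1 / Real.log 2 * (1 / N + harmonic N * (1 / (N : ℝ)))
      = 1 / Real.log 2 * ((1 + harmonic N) / N) := by ring
    _ ≤ 1 / Real.log 2 * ((2 * (1 + Real.log N)) / N) := by
        gcongr
        linarith
    _ = _ := by ring

/-! ### Variance, truncation and the weak law -/

lemma measurable_phi_iterate (N k : ℕ) : Measurable fun x => phi N (gaussMap^[k] x) :=
  (measurable_phi N).comp (measurable_gaussMap.iterate k)

lemma integrable_phi_mul (N i j : ℕ) :
    Integrable (fun x => phi N (gaussMap^[i] x) * phi N (gaussMap^[j] x)) gm := by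
  refine integrable_gm (M := N * N)
    ((measurable_phi_iterate N i).mul (measurable_phi_iterate N j)) fun x => ?_
  rw [abs_of_nonneg (mul_nonneg (phi_nonneg N _) (phi_nonneg N _))]
  exact mul_le_mul (phi_le N _) (phi_le N _) (phi_nonneg N _) (by positivity)

lemma integrable_phi (N i : ℕ) : Integrable (fun x => phi N (gaussMap^[i] x)) gm := by
  refine integrable_gm (M := N) (measurable_phi_iterate N i) fun x => ?_
  rw [abs_of_nonneg (phi_nonneg N _)]
  exact phi_le N _

/-- The bound used for the covariance at lag `j + 1`: the second moment `E` at lag one, where the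
products share a digit, and exponential decay from lag two on. -/
noncomputable def lagBound (E B : ℝ) : ℕ → ℝ
  | 0 => E
  | j + 1 => (11 / 12) ^ j * B

lemma sum_lagBound_le {E B : ℝ} (hE : 0 ≤ E) (hB : 0 ≤ B) (n : ℕ) :
    ∑ j ∈ Finset.range n, lagBound E B j ≤ E + 12 * B := by
  rcases n with _ | n
  · simp only [Finset.range_zero, Finset.sum_empty]; positivity
  · rw [Finset.sum_range_succ']
    simp only [lagBound]
    rw [← Finset.sum_mul]
    have h : ∑ i ∈ Finset.range n, (11 / 12 : ℝ) ^ i ≤ 12 := by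
      rw [geom_sum_eq (by norm_num)]
      have : (0 : ℝ) ≤ (11 / 12) ^ n := by positivity
      rw [div_le_iff_of_neg (by norm_num)]
      linarith
    nlinarith

/-- At lag one the second moment bounds the covariance by the Cauchy–Schwarz inequality. Only an
upper bound is needed for the variance of the sum. -/
lemma cov_le {N : ℕ} (hN : 1 ≤ N) (j : ℕ) :
    ∫ x, phi N x * phi N (gaussMap^[j + 1] x) ∂gm - (∫ x, phi N x ∂gm) ^ 2 ≤
      lagBound (∫ x, phi N x ^ 2 ∂gm) (200 / Real.log 2 * (1 + Real.log N) ^ 4) j := by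
  rcases j with _ | j
  · simp only [lagBound]
    have h2 : ∀ i, Integrable (fun x => phi N (gaussMap^[i] x) ^ 2) gm := fun i => by
      simpa only [pow_two] using integrable_phi_mul N i i
    have e : ∫ x, phi N (gaussMap^[1] x) ^ 2 ∂gm = ∫ x, phi N x ^ 2 ∂gm :=
      integral_comp_iterate ((measurable_phi N).pow_const 2) 1
    have h : ∫ x, phi N x * phi N (gaussMap^[0 + 1] x) ∂gm ≤
        ∫ x, (phi N (gaussMap^[0] x) ^ 2 + phi N (gaussMap^[1] x) ^ 2) * (1 / 2) ∂gm := by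
      refine integral_mono (integrable_phi_mul N 0 1) (((h2 0).add (h2 1)).mul_const _) fun x => ?_
      simp only [Function.iterate_zero, id]
      nlinarith [sq_nonneg (phi N x - phi N (gaussMap^[1] x))]
    rw [integral_mul_const, integral_add (h2 0) (h2 1), e] at h
    simp only [Function.iterate_zero, id] at h
    nlinarith [sq_nonneg (∫ x, phi N x ∂gm)]
  · exact (abs_le.1 (cov_phi hN j)).2

/-- The variance of the truncated sum grows linearly in `n`, by induction on `n` using stationarity. -/
lemma variance_bound {N : ℕ} (hN : 1 ≤ N) (n : ℕ) :
    ∫ x, (∑ i ∈ Finset.range n, (phi N (gaussMap^[i] x) - ∫ z, phi N z ∂gm)) ^ 2 ∂gm ≤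
      n * (3 * (∫ x, phi N x ^ 2 ∂gm) + 24 * (200 / Real.log 2 * (1 + Real.log N) ^ 4)) := by
  have hl2 := log_two_pos
  set E := ∫ x, phi N x ^ 2 ∂gm with hE
  set B := 200 / Real.log 2 * (1 + Real.log N) ^ 4 with hB
  set m := ∫ z, phi N z ∂gm with hm
  have hE0 : 0 ≤ E := integral_nonneg fun x => sq_nonneg _
  have hB0 : 0 ≤ B := by
    have : 0 ≤ Real.log N := Real.log_natCast_nonneg N
    positivity
  set ψ : ℕ → ℝ → ℝ := fun i x => phi N (gaussMap^[i] x) - m with hψ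
  have hmean : ∀ i, ∫ x, phi N (gaussMap^[i] x) ∂gm = m := fun i =>
    integral_comp_iterate (measurable_phi N) i
  have hprod : ∀ i j, Integrable (fun x => ψ i x * ψ j x) gm := by
    intro i j
    have e : (fun x => ψ i x * ψ j x) = fun x => phi N (gaussMap^[i] x) * phi N (gaussMap^[j] x)
      - (m * phi N (gaussMap^[i] x) + m * phi N (gaussMap^[j] x)) + m ^ 2 := by
      funext x; simp only [hψ]; ring
    rw [e]
    exact ((integrable_phi_mul N i j).sub (((integrable_phi N i).const_mul m).add
      ((integrable_phi N j).const_mul m))).add (integrable_const _)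
  have hcov : ∀ i j, ∫ x, ψ i x * ψ j x ∂gm =
      ∫ x, phi N (gaussMap^[i] x) * phi N (gaussMap^[j] x) ∂gm - m ^ 2 := by
    intro i j
    have e : (fun x => ψ i x * ψ j x) = fun x => phi N (gaussMap^[i] x) * phi N (gaussMap^[j] x)
      - (m * phi N (gaussMap^[i] x) + m * phi N (gaussMap^[j] x)) + m ^ 2 := by
      funext x; simp only [hψ]; ring
    have i1 := ((integrable_phi N i).const_mul m).add ((integrable_phi N j).const_mul m)
    have i2 := (integrable_phi_mul N i j).sub i1
    rw [e]
    refine (integral_add i2 (integrable_const _)).trans ?_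
    have s1 := integral_sub (integrable_phi_mul N i j) i1
    have s2 := integral_add ((integrable_phi N i).const_mul m) ((integrable_phi N j).const_mul m)
    simp only [Pi.add_apply] at s1
    simp only [Pi.sub_apply, Pi.add_apply]
    rw [s1, s2, integral_const_mul, integral_const_mul, hmean, hmean]
    simp only [integral_const, probReal_univ, smul_eq_mul, one_mul]
    ring
  have hshift : ∀ i j, ∫ x, phi N (gaussMap^[i] x) * phi N (gaussMap^[i + j] x) ∂gm =
      ∫ x, phi N x * phi N (gaussMap^[j] x) ∂gm := by
    intro i j
    have := integral_comp_iterate (g := fun x => phi N x * phi N (gaussMap^[j] x))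
      ((measurable_phi N).mul (measurable_phi_iterate N j)) i
    rw [← this]
    refine integral_congr_ae (Eventually.of_forall fun x => ?_)
    simp only
    rw [← Function.iterate_add_apply, add_comm j i]
  induction n with
  | zero => simp
  | succ n ih =>
    have e : ∀ x, (∑ i ∈ Finset.range (n + 1), ψ i x) ^ 2 =
        (∑ i ∈ Finset.range n, ψ i x) ^ 2 + 2 * (∑ i ∈ Finset.range n, ψ i x * ψ n x)
          + ψ n x * ψ n x := by
      intro x
      rw [Finset.sum_range_succ, ← Finset.sum_mul]
      ring
    have hsq : Integrable (fun x => (∑ i ∈ Finset.range n, ψ i x) ^ 2) gm := by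
      simp_rw [pow_two, Finset.sum_mul_sum]
      exact integrable_finsetSum _ fun i _ => integrable_finsetSum _ fun j _ => hprod i j
    have hcr : Integrable (fun x => ∑ i ∈ Finset.range n, ψ i x * ψ n x) gm :=
      integrable_finsetSum _ fun i _ => hprod i n
    have hdiag : ∫ x, ψ n x * ψ n x ∂gm ≤ E := by
      rw [hcov]
      have := hshift n 0
      simp only [add_zero, Function.iterate_zero, id, ← pow_two] at this
      simp only [← pow_two]
      rw [this, ← hE]
      nlinarith [sq_nonneg m]
    have hcross : ∑ i ∈ Finset.range n, ∫ x, ψ i x * ψ n x ∂gm ≤ E + 12 * B := by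
      refine le_trans ?_ (sum_lagBound_le hE0 hB0 n)
      rw [← Finset.sum_range_reflect]
      refine Finset.sum_le_sum fun j hj => ?_
      have hj' := Finset.mem_range.1 hj
      rw [hcov]
      have h1 := hshift (n - 1 - j) (j + 1)
      rw [show n - 1 - j + (j + 1) = n by omega] at h1
      rw [h1]
      exact cov_le hN j
    have hmain : ∫ x, (∑ i ∈ Finset.range (n + 1), ψ i x) ^ 2 ∂gm =
        ∫ x, (∑ i ∈ Finset.range n, ψ i x) ^ 2 ∂gm +
          2 * ∑ i ∈ Finset.range n, ∫ x, ψ i x * ψ n x ∂gm + ∫ x, ψ n x * ψ n x ∂gm := by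
      simp_rw [e]
      have s1 := integral_add (hsq.add (hcr.const_mul 2)) (hprod n n)
      have s2 := integral_add hsq (hcr.const_mul 2)
      simp only [Pi.add_apply] at s1
      rw [s1, s2, integral_const_mul, integral_finsetSum _ fun i _ => hprod i n]
    have ih' : ∫ x, (∑ i ∈ Finset.range n, ψ i x) ^ 2 ∂gm ≤ n * (3 * E + 24 * B) := ih
    change ∫ x, (∑ i ∈ Finset.range (n + 1), ψ i x) ^ 2 ∂gm ≤ _
    rw [hmain]
    push_cast
    linarith

lemma S_eq (n : ℕ) (x : ℝ) : S n x =
    ∑ i ∈ Finset.range n, dig (gaussMap^[i] x) * dig (gaussMap (gaussMap^[i] x)) := by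
  unfold S
  induction n with
  | zero => simp
  | succ n ih =>
    rw [Finset.sum_Icc_succ_top (by omega), ih, Finset.sum_range_succ]
    simp only [pq, dig, Nat.add_sub_cancel, Function.iterate_succ_apply']

/-- The quantitative estimate: truncation error plus Chebyshev's inequality. -/
lemma deviation_bound {n N : ℕ} (hn : 1 ≤ n) (hN : 1 ≤ N) {W c ε : ℝ} (hW : 0 < W) (hε : 0 < ε)
    (hm : |∫ z, phi N z ∂gm - c * W| ≤ ε / 2 * W) :
    gm {x | ε ≤ |(S n x : ℝ) / (n * W) - c|} ≤
      ENNReal.ofReal (n * (2 / Real.log 2 * ((1 + Real.log N) / N)) +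
        n * (3 * (1 / Real.log 2 * (N * (1 + Real.log N))) +
          24 * (200 / Real.log 2 * (1 + Real.log N) ^ 4)) / (ε / 2 * (n * W)) ^ 2) := by
  have hl2 := log_two_pos
  have hl : 0 ≤ Real.log N := Real.log_natCast_nonneg N
  have hn0 : (0 : ℝ) < n := by exact_mod_cast hn
  have hN0 : (0 : ℝ) < N := by exact_mod_cast hN
  set m := ∫ z, phi N z ∂gm with hmdef
  set Z : ℝ → ℝ := fun x => ∑ i ∈ Finset.range n, (phi N (gaussMap^[i] x) - m) with hZ
  set D : Set ℝ := {x | N < dig x * dig (gaussMap x)} with hD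
  set δ := ε / 2 * (n * W) with hδ
  have hδ0 : 0 < δ := by positivity
  have hsub : {x | ε ≤ |(S n x : ℝ) / (n * W) - c|} ⊆
      (⋃ i ∈ Finset.range n, gaussMap^[i] ⁻¹' D) ∪ {x | δ ^ 2 ≤ Z x ^ 2} := by
    -- Off the first set no term is truncated, so `S n` agrees with the truncated sum.
    intro x hx
    simp only [mem_ofPred_eq] at hx
    by_cases hbad : ∃ i ∈ Finset.range n, gaussMap^[i] x ∈ D
    · left
      obtain ⟨i, hi, h⟩ := hbad
      exact mem_iUnion₂.2 ⟨i, hi, h⟩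
    · right
      push Not at hbad
      have hS : (S n x : ℝ) = ∑ i ∈ Finset.range n, phi N (gaussMap^[i] x) := by
        rw [S_eq, Nat.cast_sum]
        refine Finset.sum_congr rfl fun i hi => ?_
        have := hbad i hi
        simp only [hD, mem_ofPred_eq, not_lt] at this
        unfold phi trunc
        rw [if_pos this]
      have hZx : Z x = S n x - n * m := by
        simp only [hZ]
        rw [Finset.sum_sub_distrib, hS]
        simp
      have h1 : (S n x : ℝ) / (n * W) - c = (S n x - n * (c * W)) / (n * W) := by
        field_simp
      rw [h1, abs_div, abs_of_pos (by positivity : 0 < n * W), le_div_iff₀ (by positivity)] at hx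
      have h2 : (S n x : ℝ) - n * (c * W) = Z x + n * (m - c * W) := by rw [hZx]; ring
      have h3 : |n * (m - c * W)| ≤ n * (ε / 2 * W) := by
        rw [abs_mul, abs_of_pos hn0]; gcongr
      rw [h2] at hx
      have h4 := abs_add_le (Z x) (n * (m - c * W))
      have h5 : δ ≤ |Z x| := by rw [hδ]; linarith
      simp only [mem_ofPred_eq]
      rw [← sq_abs (Z x)]
      gcongr
  have hbad : gm (⋃ i ∈ Finset.range n, gaussMap^[i] ⁻¹' D) ≤
      ENNReal.ofReal (n * (2 / Real.log 2 * ((1 + Real.log N) / N))) := by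
    have hDm : MeasurableSet D :=
      (measurable_dig.mul (measurable_dig.comp measurable_gaussMap)) (measurableSet_Ioi (a := N))
    refine (measure_biUnion_finset_le _ _).trans ?_
    refine (Finset.sum_le_sum fun i _ => ?_ :
      _ ≤ ∑ i ∈ Finset.range n, ENNReal.ofReal (2 / Real.log 2 * ((1 + Real.log N) / N))).trans ?_
    · rw [(measurePreserving_gaussMap.iterate i).measure_preimage hDm.nullMeasurableSet]
      exact tail_bound hN
    · rw [Finset.sum_const, Finset.card_range, nsmul_eq_mul, ENNReal.ofReal_mul hn0.le,
        ENNReal.ofReal_natCast]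
  have hcheb : gm {x | δ ^ 2 ≤ Z x ^ 2} ≤ ENNReal.ofReal
      (n * (3 * (1 / Real.log 2 * (N * (1 + Real.log N))) +
          24 * (200 / Real.log 2 * (1 + Real.log N) ^ 4)) / δ ^ 2) := by
    have hZm : Measurable Z := Finset.measurable_fun_sum _ fun i _ =>
      (measurable_phi_iterate N i).sub_const _
    have hZb : ∀ x, |Z x ^ 2| ≤ (∑ i ∈ Finset.range n, (N + |m|)) ^ 2 := by
      intro x
      rw [abs_pow]
      refine pow_le_pow_left₀ (abs_nonneg _) ?_ 2
      refine (Finset.abs_sum_le_sum_abs _ _).trans (Finset.sum_le_sum fun i _ => ?_)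
      refine (abs_sub _ _).trans (add_le_add ?_ le_rfl)
      rw [abs_of_nonneg (phi_nonneg N _)]
      exact phi_le N _
    have hV := variance_bound hN n
    have hM := mul_meas_ge_le_integral_of_nonneg (μ := gm) (f := fun x => Z x ^ 2)
      (Eventually.of_forall fun x => sq_nonneg _) (integrable_gm (hZm.pow_const 2) hZb) (δ ^ 2)
    have hE := mean_phi_sq hN
    rw [← ENNReal.ofReal_toReal (measure_ne_top gm {x | δ ^ 2 ≤ Z x ^ 2})]
    apply ENNReal.ofReal_le_ofReal
    rw [le_div_iff₀ (by positivity), mul_comm]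
    refine hM.trans (hV.trans ?_)
    gcongr
  refine (measure_mono hsub).trans ((measure_union_le _ _).trans ?_)
  rw [ENNReal.ofReal_add (by positivity) (by positivity)]
  exact add_le_add hbad hcheb

/-- For the cutoff `N = ⌊n (log n)²⌋`, `N` is of order `n (log n)²` and `log N` is close
to `log n`. -/
lemma cutoff_bounds {n : ℕ} (hL : 2 ≤ Real.log n) :
    1 ≤ ⌊n * Real.log n ^ 2⌋₊ ∧
    (⌊n * Real.log n ^ 2⌋₊ : ℝ) ≤ n * Real.log n ^ 2 ∧
    n * Real.log n ^ 2 / 2 ≤ (⌊n * Real.log n ^ 2⌋₊ : ℝ) ∧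
    Real.log n ≤ Real.log (⌊n * Real.log n ^ 2⌋₊ : ℝ) ∧
    Real.log (⌊n * Real.log n ^ 2⌋₊ : ℝ) ≤ Real.log n + 2 * Real.log (Real.log n) := by
  have hn : 1 ≤ n := by
    rcases Nat.eq_zero_or_pos n with rfl | h
    · norm_num at hL
    · exact h
  have hn1 : (1 : ℝ) ≤ n := by exact_mod_cast hn
  have hn0 : (0 : ℝ) < n := by linarith
  set L := Real.log n with hLdef
  have hL4 : 4 ≤ L ^ 2 := by nlinarith
  have hX : 4 * (n : ℝ) ≤ n * L ^ 2 := by nlinarith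
  have h1 : (⌊n * L ^ 2⌋₊ : ℝ) ≤ n * L ^ 2 := Nat.floor_le (by positivity)
  have h2 : n * L ^ 2 < ⌊n * L ^ 2⌋₊ + 1 := Nat.lt_floor_add_one _
  have h3 : n * L ^ 2 / 2 ≤ (⌊n * L ^ 2⌋₊ : ℝ) := by linarith
  have h4 : (n : ℝ) ≤ (⌊n * L ^ 2⌋₊ : ℝ) := by linarith
  refine ⟨by exact_mod_cast hn1.trans h4, h1, h3, Real.log_le_log hn0 h4, ?_⟩
  refine (Real.log_le_log (by linarith) h1).trans (le_of_eq ?_)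
  rw [Real.log_mul (by positivity) (by positivity), Real.log_pow]
  push_cast
  ring

theorem weak_law_of_large_numbers (ε : ℝ) (hε : 0 < ε) :
    Tendsto
      (fun n : ℕ => volume {x : ℝ | x ∈ Set.Ioo (0:ℝ) 1 ∧
        ε ≤ |(S n x : ℝ) / (n * Real.log n ^ 2) - 1 / (2 * Real.log 2)|})
      atTop (nhds 0) := by
  have hl2 := log_two_pos
  have hLtop : Tendsto (fun n : ℕ => Real.log n) atTop atTop :=
    Real.tendsto_log_atTop.comp tendsto_natCast_atTop_atTop
  set i2 := 1 / Real.log 2 with hi2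
  have hi2pos : 0 < i2 := by positivity
  -- The bias of the truncated mean is at most this multiple of `(log n)²`.
  have hbias : Tendsto (fun n : ℕ => i2 * (51 / Real.log n + 4 * (Real.log (Real.log n) /
      Real.log n))) atTop (nhds 0) := by
    have t1 : Tendsto (fun n : ℕ => 51 / Real.log n) atTop (nhds 0) :=
      tendsto_const_nhds.div_atTop hLtop
    have t2 : Tendsto (fun n : ℕ => Real.log (Real.log n) / Real.log n) atTop (nhds 0) :=
      (Real.isLittleO_log_id_atTop.tendsto_div_nhds_zero).comp hLtop
    simpa using (t1.add (t2.const_mul 4)).const_mul i2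
  set R : ℕ → ℝ := fun n => i2 * (12 + 36 / ε ^ 2) / Real.log n + i2 * (1555200 / ε ^ 2) / n
    with hR
  have hRlim : Tendsto R atTop (nhds 0) := by
    have t1 : Tendsto (fun n : ℕ => i2 * (12 + 36 / ε ^ 2) / Real.log n) atTop (nhds 0) :=
      tendsto_const_nhds.div_atTop hLtop
    have t2 : Tendsto (fun n : ℕ => i2 * (1555200 / ε ^ 2) / (n : ℝ)) atTop (nhds 0) :=
      tendsto_const_nhds.div_atTop tendsto_natCast_atTop_atTop
    simpa using t1.add t2
  have hub : Tendsto (fun n => ENNReal.ofReal (2 * Real.log 2) * ENNReal.ofReal (R n)) atTop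
      (nhds 0) := by
    have h := ENNReal.tendsto_ofReal (hRlim.const_mul (2 * Real.log 2))
    rw [mul_zero, ENNReal.ofReal_zero] at h
    refine h.congr fun n => ?_
    rw [ENNReal.ofReal_mul (by positivity)]
  refine tendsto_of_tendsto_of_tendsto_of_le_of_le' tendsto_const_nhds hub
    (Eventually.of_forall fun n => zero_le) ?_
  filter_upwards [hLtop.eventually_ge_atTop 2, hbias.eventually_le_const (half_pos hε),
    eventually_ge_atTop 1] with n hL hb hn
  have hn0 : (0 : ℝ) < n := by exact_mod_cast hn
  obtain ⟨hN, c1, c2, c3, c4⟩ := cutoff_bounds hL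
  set N := ⌊n * Real.log n ^ 2⌋₊ with hNdef
  have hN0 : (0 : ℝ) < N := by exact_mod_cast hN
  have hmean := mean_phi hN
  set L := Real.log n with hLdef
  set l := Real.log N with hl
  have hL0 : 0 < L := by linarith
  have hLL : Real.log L ≤ L - 1 := Real.log_le_sub_one_of_pos hL0
  have hLL0 : 0 ≤ Real.log L := Real.log_nonneg (by linarith)
  have hl3 : 1 + l ≤ 3 * L := by linarith
  have hl0 : 0 ≤ l := by linarith
  have hm : |∫ z, phi N z ∂gm - 1 / (2 * Real.log 2) * L ^ 2| ≤ ε / 2 * L ^ 2 := by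
    have e1 : l ^ 2 / (2 * Real.log 2) = i2 * (l ^ 2 / 2) := by rw [hi2]; field_simp
    have e2 : 1 / (2 * Real.log 2) * L ^ 2 = i2 * (L ^ 2 / 2) := by rw [hi2]; field_simp
    have e3 : 17 / Real.log 2 = 17 * i2 := by rw [hi2]; ring
    rw [e1, e3] at hmean
    rw [e2]
    have h1 : i2 * (51 * L + 4 * (L * Real.log L)) ≤ ε / 2 * L ^ 2 := by
      have := mul_le_mul_of_nonneg_right hb (sq_nonneg L)
      refine le_trans (le_of_eq ?_) this
      field_simp
    have h2 : l ^ 2 / 2 - L ^ 2 / 2 ≤ 4 * (L * Real.log L) := by nlinarith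
    have h2' : 0 ≤ l ^ 2 / 2 - L ^ 2 / 2 := by nlinarith
    have h3 := mul_le_mul_of_nonneg_left h2 hi2pos.le
    have h3' := mul_nonneg hi2pos.le h2'
    have h4 : 17 * i2 * (1 + l) ≤ i2 * (51 * L) := by nlinarith
    have h5 := abs_le.1 hmean
    rw [abs_le]
    constructor <;> nlinarith
  have hdev := deviation_bound hn hN (pow_pos hL0 2) hε hm
  have hset : {x : ℝ | x ∈ Set.Ioo (0 : ℝ) 1 ∧
      ε ≤ |(S n x : ℝ) / (n * L ^ 2) - 1 / (2 * Real.log 2)|} =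
      {x | ε ≤ |(S n x : ℝ) / (n * L ^ 2) - 1 / (2 * Real.log 2)|} ∩ Ioo 0 1 := by
    ext x; exact and_comm
  rw [hset]
  refine (volume_le_gm _).trans (mul_le_mul_right (hdev.trans (ENNReal.ofReal_le_ofReal ?_)) _)
  have b1 : n * (2 / Real.log 2 * ((1 + l) / N)) ≤ i2 * 12 / L := by
    calc n * (2 / Real.log 2 * ((1 + l) / N)) ≤
        n * (2 / Real.log 2 * ((3 * L) / (n * L ^ 2 / 2))) := by gcongr
      _ = i2 * 12 / L := by rw [hi2]; field_simp; ring
  have b2 : n * (3 * (1 / Real.log 2 * (N * (1 + l))) + 24 * (200 / Real.log 2 * (1 + l) ^ 4)) /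
      (ε / 2 * (n * L ^ 2)) ^ 2 ≤ i2 * (36 / ε ^ 2) / L + i2 * (1555200 / ε ^ 2) / n := by
    calc n * (3 * (1 / Real.log 2 * (N * (1 + l))) + 24 * (200 / Real.log 2 * (1 + l) ^ 4)) /
        (ε / 2 * (n * L ^ 2)) ^ 2 ≤ n * (3 * (1 / Real.log 2 * ((n * L ^ 2) * (3 * L))) +
        24 * (200 / Real.log 2 * (3 * L) ^ 4)) / (ε / 2 * (n * L ^ 2)) ^ 2 := by gcongr
      _ = i2 * (36 / ε ^ 2) / L + i2 * (1555200 / ε ^ 2) / n := by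
          rw [hi2]; field_simp; ring
  have e : R n = i2 * 12 / L + (i2 * (36 / ε ^ 2) / L + i2 * (1555200 / ε ^ 2) / n) := by
    simp only [hR]; ring
  rw [e]
  exact add_le_add b1 b2
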